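/- arXiv:1302.4106 — 2 statements merged into one kernel-verified Lean document; each statement's English description precedes it below -/
import Mathlib

section
/- Let K₁ and K₂ be two disjoint compact convex subsets of ℂⁿ, let V ⊆ ℂⁿ be an open set with K₁ ∪ K₂ ⊆ V, and let h be a holomorphic function on V. Then for every ε > 0 there exists a holomorphic polynomial Q on ℂⁿ such that sup_{z ∈ K₁ ∪ K₂} ‖h(z) − Q(z)‖ < ε. -/
open Set Filter Topology

noncomputable section

/-- Evaluation of a multivariate polynomial as a function on `ℂⁿ = Fin n → ℂ`. -/
def mvEval {n : ℕ} (p : MvPolynomial (Fin n) ℂ) : (Fin n → ℂ) → ℂ :=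
  fun z => MvPolynomial.eval z p

/-- The polynomially convex hull of a set in `ℂⁿ`. -/
def polyHull {n : ℕ} (K : Set (Fin n → ℂ)) : Set (Fin n → ℂ) :=
  {z | ∀ p : MvPolynomial (Fin n) ℂ, ‖mvEval p z‖ ≤ sSup ((fun w => ‖mvEval p w‖) '' K)}

/-- A set in `ℂⁿ` is polynomially convex if it equals its polynomially convex hull. -/
def IsPolyConvex {n : ℕ} (K : Set (Fin n → ℂ)) : Prop := polyHull K = K

/-- The polynomially convex hull of a subset of `ℂ`. -/
def polyHull1 (F : Set ℂ) : Set ℂ :=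
  {z | ∀ p : Polynomial ℂ, ‖p.eval z‖ ≤ sSup ((fun w => ‖p.eval w‖) '' F)}

/-- A subset of `ℂ` is polynomially convex if it equals its polynomially convex hull. -/
def IsPolyConvex1 (F : Set ℂ) : Prop := polyHull1 F = F

/-- Partial derivative in the `i`-th coordinate direction. -/
def pd {n : ℕ} (i : Fin n) (f : (Fin n → ℂ) → ℂ) : (Fin n → ℂ) → ℂ :=
  fun z => fderiv ℂ f z (Pi.single i 1)

/-- Iterated partial derivative `D^ℓ = ∂^{ℓ₁+⋯+ℓₙ}/∂z₁^{ℓ₁}⋯∂zₙ^{ℓₙ}`. -/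
def Dml {n : ℕ} (ℓ : Fin n → ℕ) (f : (Fin n → ℂ) → ℂ) : (Fin n → ℂ) → ℂ :=
  (List.finRange n).foldr (fun i g => (pd i)^[ℓ i] g) f

/-- Partial sums `S_λ` of a Taylor-type series around `ζ`, with coefficients computed from a
given family `g` of (extended) partial derivatives: the coefficient of the monomial
`(z-ζ)^{N_j}` is `g (N_j) ζ / (N_{j,1}! ⋯ N_{j,n}!)`. -/
def pSumExt {n : ℕ} (Nj : ℕ → Fin n → ℕ) (g : (Fin n → ℕ) → (Fin n → ℂ) → ℂ)
    (ζ : Fin n → ℂ) (lam : ℕ) : (Fin n → ℂ) → ℂ :=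
  fun z => ∑ j ∈ Finset.range (lam + 1),
    (((∏ i, Nat.factorial (Nj j i) : ℕ) : ℂ))⁻¹ * g (Nj j) ζ * ∏ i, (z i - ζ i) ^ (Nj j i)

/-- Partial sums `S_λ(f,ζ)` of the Taylor development of `f` around `ζ`. -/
def pSum {n : ℕ} (Nj : ℕ → Fin n → ℕ) (f : (Fin n → ℂ) → ℂ)
    (ζ : Fin n → ℂ) (lam : ℕ) : (Fin n → ℂ) → ℂ :=
  pSumExt Nj (fun ℓ => Dml ℓ f) ζ lam

/-- The space `O(Ω)` of holomorphic functions on `Ω`. -/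
def Ospace (n : ℕ) (Ω : Set (Fin n → ℂ)) : Type :=
  {f : (Fin n → ℂ) → ℂ // DifferentiableOn ℂ f Ω}

/-- Topology of uniform convergence on compact subsets of `Ω` on `O(Ω)` (the compact-open
topology induced via restriction to `Ω`). -/
instance (n : ℕ) (Ω : Set (Fin n → ℂ)) : TopologicalSpace (Ospace n Ω) :=
  TopologicalSpace.induced
    (fun f : Ospace n Ω =>
      (⟨Ω.restrict f.1, continuousOn_iff_continuous_restrict.mp f.2.continuousOn⟩ : C(Ω, ℂ)))
    inferInstance

/-- Membership in `A^∞(Ω)`: `f` is holomorphic on `Ω` and each partial derivative `D^ℓ f`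
extends continuously to the closure of `Ω`. -/
def AinfMem (n : ℕ) (Ω : Set (Fin n → ℂ)) (f : (Fin n → ℂ) → ℂ) : Prop :=
  DifferentiableOn ℂ f Ω ∧
    ∀ ℓ : Fin n → ℕ, ∃ g : (Fin n → ℂ) → ℂ,
      ContinuousOn g (closure Ω) ∧ Set.EqOn g (Dml ℓ f) Ω

/-- The space `A^∞(Ω)`. -/
def AinfSpace (n : ℕ) (Ω : Set (Fin n → ℂ)) : Type :=
  {f : (Fin n → ℂ) → ℂ // AinfMem n Ω f}

/-- The chosen continuous extension of `D^ℓ f` to the closure of `Ω`, for `f ∈ A^∞(Ω)`.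
(Its restriction to the closure of `Ω` is uniquely determined.) -/
def AinfExt {n : ℕ} {Ω : Set (Fin n → ℂ)} (f : AinfSpace n Ω) (ℓ : Fin n → ℕ) :
    (Fin n → ℂ) → ℂ :=
  Classical.choose (f.2.2 ℓ)

lemma AinfExt_continuousOn {n : ℕ} {Ω : Set (Fin n → ℂ)} (f : AinfSpace n Ω) (ℓ : Fin n → ℕ) :
    ContinuousOn (AinfExt f ℓ) (closure Ω) :=
  (Classical.choose_spec (f.2.2 ℓ)).1

lemma AinfExt_eqOn {n : ℕ} {Ω : Set (Fin n → ℂ)} (f : AinfSpace n Ω) (ℓ : Fin n → ℕ) :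
    Set.EqOn (AinfExt f ℓ) (Dml ℓ f.1) Ω :=
  (Classical.choose_spec (f.2.2 ℓ)).2

/-- Topology on `A^∞(Ω)`: uniform convergence of every partial derivative on every compact
subset of the closure of `Ω`. -/
instance (n : ℕ) (Ω : Set (Fin n → ℂ)) : TopologicalSpace (AinfSpace n Ω) :=
  TopologicalSpace.induced
    (fun f : AinfSpace n Ω => fun ℓ : Fin n → ℕ =>
      (⟨(closure Ω).restrict (AinfExt f ℓ),
        continuousOn_iff_continuous_restrict.mp (AinfExt_continuousOn f ℓ)⟩ :
          C(closure Ω, ℂ)))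
    inferInstance

/-- A smooth compact curve in `ℂⁿ`: the image of an injective `C^∞` map with
nowhere-vanishing derivative, defined on a compact interval (an arc) or on the
circle (a closed curve, modelled by a 1-periodic map). -/
def IsSmoothCompactCurve {n : ℕ} (K : Set (Fin n → ℂ)) : Prop :=
  ∃ γ : ℝ → (Fin n → ℂ), ContDiff ℝ (⊤ : ℕ∞) γ ∧ (∀ t, deriv γ t ≠ 0) ∧ K = γ '' Set.Icc 0 1 ∧
    (Set.InjOn γ (Set.Icc 0 1) ∨ (Function.Periodic γ 1 ∧ Set.InjOn γ (Set.Ico 0 1)))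

/-- A disjoint union of finitely many smooth compact curves. -/
def IsFiniteUnionOfSmoothCurves {n : ℕ} (K : Set (Fin n → ℂ)) : Prop :=
  ∃ (m : ℕ) (C : Fin m → Set (Fin n → ℂ)),
    (∀ i, IsSmoothCompactCurve (C i)) ∧ Pairwise (Function.onFun Disjoint C) ∧ K = ⋃ i, C i

/-!
For compact `K ⊆ ℂ^σ` let `P(K)` be the closure of the polynomials in `C(K, ℂ)`. Cauchy's integral
formula, with the resolvent of `u ∈ P(K)` as its kernel, gives two facts. If the values of
`u₁, …, uₙ ∈ P(K)` lie in a polydisc on which `h` is holomorphic, then `h(u₁, …, uₙ) ∈ P(K)`. If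
`Re u` has no zero on `K`, then the indicator function of `{Re u > 0}` is in `P(K)`: it is the
integral of the resolvent over a large circle in the closed right half plane touching the imaginary
axis. This resolvent is in `P(K)` because the circle and the axis form a connected unbounded
set disjoint from `u(K)`.

If `K` is convex, `z₀ ∈ K` and `h` is holomorphic near `K`, then `h(z₀ + t(z - z₀))` is in `P(K)`
for small `t` by the first fact, hence for `t = 1` by analytic continuation modulo the closed
subspace `P(K)`. If `K₁` and `K₂` are disjoint and convex, then a linear functional separating them
gives, by the second fact, an idempotent of `P(K₁ ∪ K₂)` gluing the approximations on `K₁` and `K₂`.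
-/

section VectorValued

open Metric

variable {E F : Type*} [NormedAddCommGroup E] [NormedSpace ℂ E]
  [NormedAddCommGroup F] [NormedSpace ℂ F]

theorem mem_of_analyticOnNhd_of_eventually_mem {A : Submodule ℂ E} (hA : IsClosed (A : Set E))
    {U : Set ℂ} (hU : IsPreconnected U) {f : ℂ → E} (hf : AnalyticOnNhd ℂ f U) {z₀ : ℂ}
    (hz₀ : z₀ ∈ U) (hfA : ∀ᶠ z in 𝓝 z₀, f z ∈ A) {z : ℂ} (hz : z ∈ U) : f z ∈ A := by
  have mkQL_eq_zero (x : E) : A.mkQL x = 0 ↔ x ∈ A := Submodule.Quotient.mk_eq_zero A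
  rw [← mkQL_eq_zero]
  exact (A.mkQL.comp_analyticOnNhd hf).eqOn_zero_of_preconnected_of_eventuallyEq_zero hU hz₀
    (hfA.mono fun w hw ↦ (mkQL_eq_zero _).2 hw) hz

variable [CompleteSpace E] [CompleteSpace F]

theorem circleIntegral_clm_comp_comm (L : E →L[ℂ] F) {f : ℂ → E} {c : ℂ} {R : ℝ}
    (hf : CircleIntegrable f c R) :
    (∮ z in C(c, R), L (f z)) = L (∮ z in C(c, R), f z) := by
  unfold circleIntegral
  simp only [← ContinuousLinearMap.intervalIntegral_comp_comm L hf.out, map_smul]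

theorem circleIntegral_mem_of_isClosed {A : Submodule ℂ E} (hA : IsClosed (A : Set E))
    {f : ℂ → E} {c : ℂ} {R : ℝ} (hR : 0 ≤ R) (hf : CircleIntegrable f c R)
    (hfA : ∀ z ∈ sphere c R, f z ∈ A) :
    (∮ z in C(c, R), f z) ∈ A := by
  rw [← A.ker_mkQ, LinearMap.mem_ker, ← A.mkQL_apply, ← circleIntegral_clm_comp_comm A.mkQL hf]
  calc (∮ z in C(c, R), A.mkQL (f z)) = ∮ _ in C(c, R), (0 : E ⧸ A) :=
        circleIntegral.integral_congr hR fun z hz ↦ (Submodule.Quotient.mk_eq_zero A).2 (hfA z hz)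
    _ = 0 := by simp [circleIntegral]

theorem analyticOnNhd_of_separating {ι : Type*} (L : ι → E →L[ℂ] F)
    (hL : ∀ x y, (∀ i, L i x = L i y) → x = y) {U : Set ℂ} (hU : IsOpen U) {f : ℂ → E}
    (hf : ContinuousOn f U) (hLf : ∀ i, DifferentiableOn ℂ (fun z ↦ L i (f z)) U) :
    AnalyticOnNhd ℂ f U := by
  intro c hc
  obtain ⟨R, hR, hRU⟩ := Metric.nhds_basis_closedBall.mem_iff.1 (hU.mem_nhds hc)
  lift R to NNReal using hR.le
  have hfR : ContinuousOn f (sphere c R) :=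
    hf.mono (sphere_subset_closedBall.trans hRU)
  refine (hasFPowerSeriesOn_cauchy_integral (hfR.circleIntegrable R.2) hR).analyticAt.congr ?_
  filter_upwards [ball_mem_nhds c hR] with w hw
  refine hL _ _ fun i ↦ ?_
  have hint : CircleIntegrable (fun z ↦ (z - w)⁻¹ • f z) c R := by
    refine ContinuousOn.circleIntegrable R.2 (.smul (.inv₀ (by fun_prop) fun z hz ↦ ?_) hfR)
    exact sub_ne_zero.2 fun h ↦ (mem_ball.1 hw).ne (h ▸ hz)
  rw [map_smul, ← circleIntegral_clm_comp_comm (L i) hint]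
  simp only [map_smul]
  have hdiff : DiffContOnCl ℂ (fun z ↦ L i (f z)) (ball c R) :=
    ((hLf i).mono hRU).diffContOnCl_ball le_rfl
  exact hdiff.two_pi_i_inv_smul_circleIntegral_sub_inv_smul hw

end VectorValued

section ClosedSubalgebra

open Metric

-- The extra points of the spectrum in a closed subalgebra form bounded components.
theorem subset_resolventSet_of_isPreconnected {B : Type*} [NormedRing B] [NormedAlgebra ℂ B]
    [CompleteSpace B] {A : Subalgebra ℂ B} (hA : IsClosed (A : Set B)) (u : A) {S : Set ℂ}
    (hS : IsPreconnected S) (hunb : ¬ Bornology.IsBounded S)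
    (hSu : S ⊆ resolventSet ℂ (u : B)) : S ⊆ resolventSet ℂ u := by
  intro z hz
  by_contra hzu
  refine hunb ((Subalgebra.spectrum_isBounded_connectedComponentIn (hS := hA) A u hzu).subset ?_)
  refine hS.subset_connectedComponentIn hz fun w hw hwu ↦ hwu (hSu hw)

theorem continuousOn_resolvent {B : Type*} [NormedRing B] [NormedAlgebra ℂ B] [CompleteSpace B]
    (u : B) : ContinuousOn (resolvent u) (resolventSet ℂ u) := fun _ hζ ↦
  (spectrum.hasDerivAt_resolvent_const_left hζ).continuousAt.continuousWithinAt

theorem resolvent_apply {X : Type*} [TopologicalSpace X] {A : Subalgebra ℂ C(X, ℂ)} {u : A}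
    {ζ : ℂ} (hζ : ζ ∈ resolventSet ℂ u) (x : X) :
    ((resolvent u ζ : A) : C(X, ℂ)) x = (ζ - (u : C(X, ℂ)) x)⁻¹ := by
  refine eq_inv_of_mul_eq_one_right ?_
  have h : (algebraMap ℂ A ζ - u) * resolvent u ζ = 1 := Ring.mul_inverse_cancel _ hζ
  exact congrArg (fun a : A ↦ (a : C(X, ℂ)) x) h

variable {X : Type*} [TopologicalSpace X] [CompactSpace X]

theorem mem_of_circleIntegral_resolvent {A : Subalgebra ℂ C(X, ℂ)}
    (hA : IsClosed (A : Set C(X, ℂ))) (u : A) {c : ℂ} {R : ℝ} (hR : 0 ≤ R)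
    (hu : sphere c R ⊆ resolventSet ℂ u) {k : ℂ → C(X, ℂ)}
    (hk : ContinuousOn k (sphere c R)) (hkA : ∀ ζ ∈ sphere c R, k ζ ∈ A)
    {f : C(X, ℂ)} (hf : ∀ x, (∮ ζ in C(c, R), (ζ - (u : C(X, ℂ)) x)⁻¹ * k ζ x) =
      2 * Real.pi * Complex.I * f x) : f ∈ A := by
  have := hA.completeSpace_coe
  have hint : CircleIntegrable (fun ζ ↦ ((resolvent u ζ : A) : C(X, ℂ)) * k ζ) c R :=
    ((continuous_subtype_val.comp_continuousOn <|
      (continuousOn_resolvent u).mono hu).mul hk).circleIntegrable hR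
  have hmem : (∮ ζ in C(c, R), ((resolvent u ζ : A) : C(X, ℂ)) * k ζ) ∈ Subalgebra.toSubmodule A :=
    circleIntegral_mem_of_isClosed hA hR hint fun ζ hζ ↦ A.mul_mem (SetLike.coe_mem _) (hkA ζ hζ)
  have hval : (∮ ζ in C(c, R), ((resolvent u ζ : A) : C(X, ℂ)) * k ζ) =
      (2 * Real.pi * Complex.I) • f := by
    ext x
    rw [ContinuousMap.smul_apply, smul_eq_mul, ← hf x, ← ContinuousMap.evalCLM_apply ℂ x,
      ← circleIntegral_clm_comp_comm _ hint]
    refine circleIntegral.integral_congr hR fun ζ hζ ↦ ?_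
    simp [resolvent_apply (hu hζ)]
  rw [hval] at hmem
  exact (Submodule.smul_mem_iff _ Complex.two_pi_I_ne_zero).1 hmem

theorem sphere_subset_resolventSet {A : Subalgebra ℂ C(X, ℂ)} (hA : IsClosed (A : Set C(X, ℂ)))
    (u : A) {c : ℂ} {R : ℝ} (hR : 0 < R) (hu : ∀ x, (u : C(X, ℂ)) x ∈ ball c R) :
    sphere c R ⊆ resolventSet ℂ u := by
  have := hA.completeSpace_coe
  intro ζ hζ
  have hnorm : ‖u - algebraMap ℂ A c‖ < R :=
    (ContinuousMap.norm_lt_iff _ hR).2 fun x ↦ mem_ball_iff_norm.1 (hu x)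
  have hone : ‖(1 : A)‖ ≤ 1 := (ContinuousMap.norm_le _ zero_le_one).2 fun x ↦ by simp
  have hmem : ζ - c ∈ resolventSet ℂ (u - algebraMap ℂ A c) :=
    spectrum.mem_resolventSet_of_norm_lt_mul <| calc
      ‖u - algebraMap ℂ A c‖ * ‖(1 : A)‖ ≤ ‖u - algebraMap ℂ A c‖ :=
        mul_le_of_le_one_right (norm_nonneg _) hone
      _ < ‖ζ - c‖ := by rwa [mem_sphere_iff_norm.1 hζ]
  rw [spectrum.mem_resolventSet_iff] at hmem ⊢
  simpa using hmem

theorem mkD_apply_of_continuousOn_uncurry {T Y Z : Type*} [TopologicalSpace T]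
    [TopologicalSpace Y] [TopologicalSpace Z] {g : T → Y → Z} {s : Set T}
    (hg : ContinuousOn (Function.uncurry g) (s ×ˢ univ)) (f₀ : C(Y, Z)) {t : T} (ht : t ∈ s)
    (y : Y) : ContinuousMap.mkD (g t) f₀ y = g t y :=
  ContinuousMap.mkD_apply_of_continuous
    (hg.comp_continuous (Continuous.prodMk_right t) fun y ↦ ⟨ht, mem_univ y⟩)

theorem mem_of_holomorphic_substitution {A : Subalgebra ℂ C(X, ℂ)}
    (hA : IsClosed (A : Set C(X, ℂ))) (u : A) {c : ℂ} {R : ℝ} (hR : 0 < R)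
    (hu : ∀ x, (u : C(X, ℂ)) x ∈ ball c R) {g : ℂ → X → ℂ}
    (hg : ContinuousOn (Function.uncurry g) (closedBall c R ×ˢ univ))
    (hgd : ∀ x, DifferentiableOn ℂ (fun ζ ↦ g ζ x) (closedBall c R))
    (hgA : ∀ ζ ∈ sphere c R, ∀ k : C(X, ℂ), (∀ x, k x = g ζ x) → k ∈ A) {f : C(X, ℂ)}
    (hf : ∀ x, f x = g ((u : C(X, ℂ)) x) x) : f ∈ A := by
  have mkD_apply {ζ : ℂ} (hζ : ζ ∈ sphere c R) :=
    mkD_apply_of_continuousOn_uncurry hg 0 (sphere_subset_closedBall hζ)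
  refine mem_of_circleIntegral_resolvent hA u hR.le (sphere_subset_resolventSet hA u hR hu)
    ((ContinuousMap.continuousOn_mkD_of_uncurry g 0 hg).mono sphere_subset_closedBall)
    (fun ζ hζ ↦ hgA ζ hζ _ (mkD_apply hζ)) fun x ↦ ?_
  rw [hf x, ← smul_eq_mul, ← (hgd x).circleIntegral_sub_inv_smul (hu x)]
  exact circleIntegral.integral_congr hR.le fun ζ hζ ↦
    congrArg ((ζ - (u : C(X, ℂ)) x)⁻¹ * ·) (mkD_apply hζ x)

theorem mem_of_holomorphic_family {A : Submodule ℂ C(X, ℂ)} (hA : IsClosed (A : Set C(X, ℂ)))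
    {U S : Set ℂ} (hU : IsOpen U) (hSU : S ⊆ U) (hS : IsPreconnected S) {g : ℂ → X → ℂ}
    (hg : ContinuousOn (Function.uncurry g) (U ×ˢ univ))
    (hgd : ∀ x, DifferentiableOn ℂ (fun t ↦ g t x) U) {t₀ t : ℂ} (ht₀ : t₀ ∈ S) (ht : t ∈ S)
    (hgA : ∀ᶠ t in 𝓝 t₀, ∀ f : C(X, ℂ), (∀ x, f x = g t x) → f ∈ A) {f : C(X, ℂ)}
    (hf : ∀ x, f x = g t x) : f ∈ A := by
  let F (t : ℂ) : C(X, ℂ) := ContinuousMap.mkD (g t) 0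
  have F_apply {t : ℂ} (ht : t ∈ U) (x : X) : F t x = g t x :=
    mkD_apply_of_continuousOn_uncurry hg 0 ht x
  have hF : AnalyticOnNhd ℂ F U :=
    analyticOnNhd_of_separating (ContinuousMap.evalCLM ℂ) (fun _ _ ↦ ContinuousMap.ext) hU
      (ContinuousMap.continuousOn_mkD_of_uncurry g 0 hg)
      fun x ↦ (hgd x).congr fun t ht ↦ F_apply ht x
  have hF₀ : ∀ᶠ t in 𝓝 t₀, F t ∈ A := by
    filter_upwards [hgA, hU.mem_nhds (hSU ht₀)] with t htA htU
    exact htA _ (F_apply htU)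
  have hfF : f = F t := ContinuousMap.ext fun x ↦ (hf x).trans (F_apply (hSU ht) x).symm
  exact hfF ▸ mem_of_analyticOnNhd_of_eventually_mem hA hS (hF.mono hSU) ht₀ hF₀ ht

end ClosedSubalgebra

section FunctionalCalculus

open Metric

variable {X : Type*} [TopologicalSpace X] [CompactSpace X] {σ : Type*} [Fintype σ]

theorem piecewise_mem_closedBall [DecidableEq σ] {c v w : σ → ℂ} {R : ℝ} (hR : 0 ≤ R)
    (hv : v ∈ closedBall c R) (hw : w ∈ closedBall c R) (s : Finset σ) :
    s.piecewise v w ∈ closedBall c R := by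
  rw [closedBall_pi _ hR] at *
  exact s.piecewise_mem_set_pi hv hw

theorem update_mem_closedBall [DecidableEq σ] {c w : σ → ℂ} {R : ℝ} (hR : 0 ≤ R)
    (hw : w ∈ closedBall c R) {i : σ} {ζ : ℂ} (hζ : ζ ∈ closedBall (c i) R) :
    Function.update w i ζ ∈ closedBall c R := by
  rw [closedBall_pi _ hR] at *
  exact Set.update_mem_pi_iff.2 ⟨fun j hj ↦ hw j hj.1, fun _ ↦ hζ⟩

theorem differentiableOn_comp_update [DecidableEq σ] {h : (σ → ℂ) → ℂ} {c w : σ → ℂ} {R : ℝ}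
    (hR : 0 ≤ R) (hh : DifferentiableOn ℂ h (closedBall c R))
    (hw : w ∈ closedBall c R) (i : σ) :
    DifferentiableOn ℂ (fun ζ ↦ h (Function.update w i ζ)) (closedBall (c i) R) :=
  hh.comp (fun ζ _ ↦ (hasFDerivAt_update w ζ).differentiableAt.differentiableWithinAt)
    fun _ hζ ↦ update_mem_closedBall hR hw hζ

-- Cauchy's formula applies to one variable at a time: `s` holds those where `u` is substituted.
theorem mem_of_eq_piecewise [DecidableEq σ] {A : Subalgebra ℂ C(X, ℂ)}
    (hA : IsClosed (A : Set C(X, ℂ))) (u : σ → A) {c : σ → ℂ} {R : ℝ} (hR : 0 < R)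
    (hu : ∀ i x, (u i : C(X, ℂ)) x ∈ ball (c i) R) {h : (σ → ℂ) → ℂ}
    (hh : DifferentiableOn ℂ h (closedBall c R)) (s : Finset σ) {w : σ → ℂ}
    (hw : w ∈ closedBall c R) {f : C(X, ℂ)}
    (hf : ∀ x, f x = h (s.piecewise (fun i ↦ (u i : C(X, ℂ)) x) w)) : f ∈ A := by
  let v (x : X) (i : σ) : ℂ := (u i : C(X, ℂ)) x
  have hv (x : X) : v x ∈ closedBall c R := by
    rw [closedBall_pi _ hR.le]
    exact fun i _ ↦ ball_subset_closedBall (hu i x)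
  induction s using Finset.induction_on generalizing w f with
  | empty =>
    convert A.algebraMap_mem (h w)
    ext x
    simpa using hf x
  | insert i s hi ih =>
    have hvw (x : X) : s.piecewise (v x) w ∈ closedBall c R :=
      piecewise_mem_closedBall hR.le (hv x) hw s
    have piecewise_cont : Continuous fun x ↦ s.piecewise (v x) w :=
      continuous_pi fun j ↦ by
        by_cases hj : j ∈ s <;> simp only [Finset.piecewise, hj, if_true, if_false, v] <;> fun_prop
    refine mem_of_holomorphic_substitution hA (u i) hR (hu i)
      (g := fun ζ x ↦ h (Function.update (s.piecewise (v x) w) i ζ)) ?_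
      (fun x ↦ differentiableOn_comp_update hR.le hh (hvw x) i) (fun ζ hζ k hk ↦ ?_) fun x ↦ ?_
    · exact hh.continuousOn.comp
        ((piecewise_cont.comp continuous_snd).update i continuous_fst).continuousOn
        fun p hp ↦ update_mem_closedBall hR.le (hvw p.2) hp.1
    · refine ih (update_mem_closedBall hR.le hw (sphere_subset_closedBall hζ)) fun x ↦ ?_
      rw [hk x, s.update_piecewise_of_notMem _ _ hi]
    · rw [hf x, s.piecewise_insert]

theorem mem_of_holomorphic_polydisc {A : Subalgebra ℂ C(X, ℂ)} (hA : IsClosed (A : Set C(X, ℂ)))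
    (u : σ → A) {c : σ → ℂ} {R : ℝ} (hR : 0 < R)
    (hu : ∀ i x, (u i : C(X, ℂ)) x ∈ ball (c i) R) {h : (σ → ℂ) → ℂ}
    (hh : DifferentiableOn ℂ h (closedBall c R)) {f : C(X, ℂ)}
    (hf : ∀ x, f x = h fun i ↦ (u i : C(X, ℂ)) x) : f ∈ A := by
  classical
  exact mem_of_eq_piecewise hA u hR hu hh Finset.univ (mem_closedBall_self hR.le)
    (by simpa only [Finset.piecewise_univ] using hf)

end FunctionalCalculus

section Idempotent

open Metric

theorem norm_sub_ofReal_sq (w : ℂ) (R : ℝ) :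
    ‖w - R‖ ^ 2 = R ^ 2 + (‖w‖ ^ 2 - 2 * R * w.re) := by
  rw [Complex.sq_norm, Complex.sq_norm, Complex.normSq_sub, Complex.normSq_ofReal,
    Complex.conj_ofReal, Complex.re_mul_ofReal]
  ring

theorem isPreconnected_sphere_union_imaginaryAxis {R : ℝ} (hR : 0 ≤ R) :
    IsPreconnected (sphere (R : ℂ) R ∪ {z | z.re = 0}) :=
  IsPreconnected.union 0 (by simp [abs_of_nonneg hR]) Complex.zero_re
    (isPreconnected_sphere (by simp [Complex.rank_real_complex]) _ _)
    (convex_hyperplane (f := Complex.re) Complex.reLm.isLinear 0).isPreconnected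

theorem not_isBounded_imaginaryAxis : ¬ Bornology.IsBounded {z : ℂ | z.re = 0} := by
  intro hbdd
  obtain ⟨C, hC⟩ := hbdd.exists_norm_le
  have hle : |C| + 1 ≤ C := calc
    |C| + 1 = ‖((|C| + 1 : ℝ) : ℂ) * Complex.I‖ := by
      rw [norm_mul, Complex.norm_I, mul_one, Complex.norm_of_nonneg (by positivity)]
    _ ≤ C := hC _ (by simp)
  linarith [le_abs_self C]

variable {X : Type*} [TopologicalSpace X]

theorem mem_resolventSet_iff_forall_ne (u : C(X, ℂ)) {ζ : ℂ} :
    ζ ∈ resolventSet ℂ u ↔ ∀ x, u x ≠ ζ := by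
  rw [spectrum.mem_resolventSet_iff, ContinuousMap.isUnit_iff_forall_ne_zero]
  exact forall_congr' fun x ↦ sub_ne_zero.trans ne_comm

variable [CompactSpace X]

theorem exists_norm_sq_lt_mul_abs_re {u : C(X, ℂ)} (hu : ∀ x, (u x).re ≠ 0) :
    ∃ R : ℝ, 0 < R ∧ ∀ x, ‖u x‖ ^ 2 < 2 * R * |(u x).re| := by
  have hcont : Continuous fun x ↦ ‖u x‖ ^ 2 / |(u x).re| :=
    (by fun_prop : Continuous fun x ↦ ‖u x‖ ^ 2).div (by fun_prop) fun x ↦ abs_ne_zero.2 (hu x)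
  obtain ⟨M, hM⟩ := isCompact_univ.exists_bound_of_continuousOn hcont.continuousOn
  refine ⟨(|M| + 1) / 2, by positivity, fun x ↦ ?_⟩
  rw [mul_div_cancel₀ _ two_ne_zero, ← div_lt_iff₀ (abs_pos.2 (hu x))]
  calc _ ≤ ‖‖u x‖ ^ 2 / |(u x).re|‖ := le_abs_self _
    _ ≤ M := hM x (mem_univ x)
    _ < |M| + 1 := (le_abs_self M).trans_lt (lt_add_one _)

theorem exists_ball_separating {u : C(X, ℂ)} (hu : ∀ x, (u x).re ≠ 0) :
    ∃ R : ℝ, 0 < R ∧ (∀ x, 0 < (u x).re → u x ∈ ball (R : ℂ) R) ∧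
      ∀ x, (u x).re < 0 → u x ∉ closedBall (R : ℂ) R := by
  obtain ⟨R, hR, hbound⟩ := exists_norm_sq_lt_mul_abs_re hu
  refine ⟨R, hR, fun x hx ↦ ?_, fun x hx ↦ ?_⟩
  · have hxR := hbound x
    rw [abs_of_pos hx] at hxR
    rw [mem_ball_iff_norm]
    refine lt_of_pow_lt_pow_left₀ 2 hR.le ?_
    linarith [norm_sub_ofReal_sq (u x) R]
  · rw [mem_closedBall_iff_norm, not_le]
    refine lt_of_pow_lt_pow_left₀ 2 (norm_nonneg _) ?_
    rw [norm_sub_ofReal_sq]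
    linarith [sq_nonneg ‖u x‖, mul_pos_of_neg_of_neg hx (neg_lt_zero.2 hR)]

theorem circleIntegral_sub_inv_of_notMem_closedBall {c w : ℂ} {R : ℝ} (hR : 0 ≤ R)
    (hw : w ∉ closedBall c R) : (∮ z in C(c, R), (z - w)⁻¹) = 0 := by
  refine DiffContOnCl.circleIntegral_eq_zero hR (DifferentiableOn.diffContOnCl fun z hz ↦ ?_)
  have hzw : z - w ≠ 0 := sub_ne_zero.2 fun h ↦
    hw (h ▸ closure_ball_subset_closedBall hz)
  fun_prop (disch := assumption)

theorem exists_mem_eq_ite_re {A : Subalgebra ℂ C(X, ℂ)} (hA : IsClosed (A : Set C(X, ℂ)))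
    (u : A) (hu : ∀ x, ((u : C(X, ℂ)) x).re ≠ 0) :
    ∃ e ∈ A, ∀ x, e x = if ((u : C(X, ℂ)) x).re ≤ 0 then 0 else 1 := by
  have hcont : Continuous fun x ↦ if ((u : C(X, ℂ)) x).re ≤ 0 then (0 : ℂ) else 1 :=
    continuous_const.if_le continuous_const (by fun_prop) continuous_const
      fun x hx ↦ absurd hx (hu x)
  refine ⟨⟨_, hcont⟩, ?_, fun _ ↦ rfl⟩
  obtain ⟨R, hR, inside, outside⟩ := exists_ball_separating hu
  have avoids (x : X) : (u : C(X, ℂ)) x ∉ sphere (R : ℂ) R ∪ {z | z.re = 0} := by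
    rintro (hx | hx)
    · rcases (hu x).lt_or_gt with hneg | hpos
      · exact outside x hneg (sphere_subset_closedBall hx)
      · exact (mem_ball.1 (inside x hpos)).ne hx
    · exact hu x hx
  have hres : sphere (R : ℂ) R ∪ {z | z.re = 0} ⊆ resolventSet ℂ u :=
    subset_resolventSet_of_isPreconnected hA u (isPreconnected_sphere_union_imaginaryAxis hR.le)
      (fun h ↦ not_isBounded_imaginaryAxis (h.subset subset_union_right))
      fun ζ hζ ↦ (mem_resolventSet_iff_forall_ne _).2 fun x hx ↦ avoids x (hx ▸ hζ)
  refine mem_of_circleIntegral_resolvent hA u hR.le (subset_union_left.trans hres) (k := 1)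
    continuousOn_const (fun _ _ ↦ A.one_mem) fun x ↦ ?_
  simp only [Pi.one_apply, ContinuousMap.one_apply, mul_one, ContinuousMap.coe_mk]
  split_ifs with hx
  · rw [circleIntegral_sub_inv_of_notMem_closedBall hR.le (outside x (hx.lt_of_ne (hu x))),
      mul_zero]
  · rw [circleIntegral.integral_sub_inv_of_mem_ball (inside x (not_le.1 hx)), mul_one]

end Idempotent

theorem isOpen_setOf_forall_apply_mem {T X Y : Type*} [TopologicalSpace T] [TopologicalSpace X]
    [TopologicalSpace Y] [CompactSpace X] {φ : T → X → Y} (hφ : Continuous (Function.uncurry φ))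
    {V : Set Y} (hV : IsOpen V) : IsOpen {t | ∀ x, φ t x ∈ V} := by
  have hcompl : {t | ∀ x, φ t x ∈ V}ᶜ = Prod.fst '' (Function.uncurry φ ⁻¹' V)ᶜ := by
    ext t
    simp
  rw [← isClosed_compl_iff, hcompl]
  exact isClosedMap_fst_of_compactSpace _ (hV.preimage hφ).isClosed_compl

theorem continuous_uncurry_lineMap {E : Type*} [AddCommGroup E] [Module ℂ E] [TopologicalSpace E]
    [IsTopologicalAddGroup E] [ContinuousSMul ℂ E] {K : Set E} (z₀ : E) :
    Continuous (Function.uncurry fun (t : ℂ) (z : K) ↦ AffineMap.lineMap z₀ z.1 t) :=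
  continuous_const.lineMap (continuous_subtype_val.comp continuous_snd) continuous_fst

section PolynomialClosure

open Metric

variable {σ : Type*}

/-- The restriction of polynomial functions on `ℂ^σ` to the set `K`. -/
def polynomialRestriction (K : Set (σ → ℂ)) : MvPolynomial σ ℂ →ₐ[ℂ] C(K, ℂ) :=
  MvPolynomial.aeval fun i ↦ (ContinuousMap.eval i : C(σ → ℂ, ℂ)).restrict K

/-- The algebra `P(K)` of uniform limits on the compact set `K` of polynomials, as a closed
subalgebra of `C(K, ℂ)`. -/
def polynomialClosure (K : Set (σ → ℂ)) [CompactSpace K] : Subalgebra ℂ C(K, ℂ) :=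
  (polynomialRestriction K).range.topologicalClosure

variable {K : Set (σ → ℂ)}

theorem polynomialRestriction_apply (Q : MvPolynomial σ ℂ) (z : K) :
    polynomialRestriction K Q z = MvPolynomial.eval z.1 Q := by
  induction Q using MvPolynomial.induction_on with
  | C a => simp [polynomialRestriction, algebraMap_apply]
  | add p q hp hq => simp [hp, hq]
  | mul_X p i hp =>
    rw [map_mul, ContinuousMap.mul_apply, hp]
    simp [polynomialRestriction]

variable [CompactSpace K]

theorem isClosed_polynomialClosure : IsClosed (polynomialClosure K : Set C(K, ℂ)) :=
  Subalgebra.isClosed_topologicalClosure _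

theorem polynomialRestriction_mem (Q : MvPolynomial σ ℂ) :
    polynomialRestriction K Q ∈ polynomialClosure K :=
  Subalgebra.le_topologicalClosure _ ⟨Q, rfl⟩

theorem mem_polynomialClosure_iff {f : C(K, ℂ)} :
    f ∈ polynomialClosure K ↔
      ∀ ε > 0, ∃ Q : MvPolynomial σ ℂ, ∀ z : K, ‖f z - MvPolynomial.eval z.1 Q‖ < ε := by
  rw [polynomialClosure, ← SetLike.mem_coe, Subalgebra.topologicalClosure_coe,
    Metric.mem_closure_iff]
  refine forall₂_congr fun ε hε ↦ ?_
  simp only [SetLike.mem_coe, AlgHom.mem_range, exists_exists_eq_and, dist_eq_norm,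
    ContinuousMap.norm_lt_iff _ hε, ContinuousMap.sub_apply, polynomialRestriction_apply]

theorem mem_polynomialClosure_of_continuousLinearMap [Finite σ] (L : (σ → ℂ) →L[ℂ] ℂ) {f : C(K, ℂ)}
    (hf : ∀ z : K, f z = L z) : f ∈ polynomialClosure K := by
  classical
  have := Fintype.ofFinite σ
  convert polynomialRestriction_mem
    (∑ i, MvPolynomial.C (L fun j ↦ if i = j then 1 else 0) * MvPolynomial.X i)
  ext z
  rw [hf, polynomialRestriction_apply, ← L.coe_coe, LinearMap.pi_apply_eq_sum_univ]
  simp [mul_comm]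

theorem mem_polynomialClosure_of_eq_comp_eval [Fintype σ] {h : (σ → ℂ) → ℂ} {c : σ → ℂ}
    {R : ℝ} (hR : 0 < R) (hh : DifferentiableOn ℂ h (closedBall c R)) (P : σ → MvPolynomial σ ℂ)
    (hP : ∀ z : K, (fun i ↦ MvPolynomial.eval z.1 (P i)) ∈ ball c R) {f : C(K, ℂ)}
    (hf : ∀ z : K, f z = h fun i ↦ MvPolynomial.eval z.1 (P i)) : f ∈ polynomialClosure K := by
  simp only [← polynomialRestriction_apply] at hP hf
  refine mem_of_holomorphic_polydisc isClosed_polynomialClosure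
    (fun i ↦ ⟨_, polynomialRestriction_mem (P i)⟩) hR (fun i z ↦ ?_) hh hf
  have hPz := hP z
  rw [ball_pi _ hR] at hPz
  exact hPz i (mem_univ i)

variable [Finite σ]

theorem eventually_dilation_mem_polynomialClosure {V : Set (σ → ℂ)} (hV : IsOpen V)
    {h : (σ → ℂ) → ℂ} (hh : DifferentiableOn ℂ h V) {z₀ : σ → ℂ} (hz₀ : z₀ ∈ V) :
    ∀ᶠ t : ℂ in 𝓝 0, ∀ f : C(K, ℂ), (∀ z : K, f z = h (AffineMap.lineMap z₀ z.1 t)) →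
      f ∈ polynomialClosure K := by
  have := Fintype.ofFinite σ
  obtain ⟨R, hR, hRV⟩ := Metric.nhds_basis_closedBall.mem_iff.1 (hV.mem_nhds hz₀)
  have hopen := isOpen_setOf_forall_apply_mem (continuous_uncurry_lineMap (K := K) z₀)
    (Metric.isOpen_ball (x := z₀) (ε := R))
  filter_upwards [hopen.mem_nhds fun z ↦ by simpa using hR] with t ht f hf
  let P (i : σ) : MvPolynomial σ ℂ :=
    .C t * (.X i - .C (z₀ i)) + .C (z₀ i)
  have hP (z : K) : (fun i ↦ MvPolynomial.eval z.1 (P i)) = AffineMap.lineMap z₀ z.1 t := by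
    ext i
    simp [P, AffineMap.lineMap_apply]
  exact mem_polynomialClosure_of_eq_comp_eval hR (hh.mono hRV) P (fun z ↦ hP z ▸ ht z)
    fun z ↦ hP z ▸ hf z

theorem mem_polynomialClosure_of_starConvex {z₀ : σ → ℂ} (hK : StarConvex ℝ z₀ K) (hz₀ : z₀ ∈ K)
    {V : Set (σ → ℂ)} (hV : IsOpen V) (hKV : K ⊆ V) {h : (σ → ℂ) → ℂ}
    (hh : DifferentiableOn ℂ h V) {f : C(K, ℂ)} (hf : ∀ z : K, f z = h z) :
    f ∈ polynomialClosure K := by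
  have := Fintype.ofFinite σ
  let T : Set ℂ := {t | ∀ z : K, AffineMap.lineMap z₀ z.1 t ∈ V}
  have hT : IsOpen T := isOpen_setOf_forall_apply_mem (continuous_uncurry_lineMap z₀) hV
  have unitInterval_subset : Complex.ofReal '' Icc 0 1 ⊆ T := by
    rintro _ ⟨t, ht, rfl⟩ z
    have hmem := hKV (hK.add_smul_sub_mem z.2 ht.1 ht.2)
    rwa [AffineMap.lineMap_apply_module', add_comm, Complex.coe_smul]
  refine mem_of_holomorphic_family (A := (polynomialClosure K).toSubmodule)
    (g := fun t z ↦ h (AffineMap.lineMap z₀ z.1 t)) (t₀ := 0) (t := 1)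
    isClosed_polynomialClosure hT unitInterval_subset
    (isPreconnected_Icc.image _ Complex.continuous_ofReal.continuousOn) ?_ (fun z ↦ ?_)
    ⟨0, by simp⟩ ⟨1, by simp⟩ (eventually_dilation_mem_polynomialClosure hV hh (hKV hz₀))
    fun z ↦ by rw [AffineMap.lineMap_apply_one, hf]
  · exact hh.continuousOn.comp (continuous_uncurry_lineMap z₀).continuousOn fun p hp ↦ hp.1 p.2
  · exact hh.comp (fun t _ ↦ AffineMap.hasDerivAt_lineMap.differentiableAt.differentiableWithinAt)
      fun t ht ↦ ht z

theorem mem_polynomialClosure_of_convex (hK : Convex ℝ K) {V : Set (σ → ℂ)} (hV : IsOpen V)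
    (hKV : K ⊆ V) {h : (σ → ℂ) → ℂ} (hh : DifferentiableOn ℂ h V) {f : C(K, ℂ)}
    (hf : ∀ z : K, f z = h z) : f ∈ polynomialClosure K := by
  rcases K.eq_empty_or_nonempty with rfl | ⟨z₀, hz₀⟩
  · rw [Subsingleton.elim f 0]
    exact zero_mem _
  · exact mem_polynomialClosure_of_starConvex (hK.starConvex hz₀) hz₀ hV hKV hh hf

end PolynomialClosure

section Union

variable {σ : Type*} {K₁ K₂ : Set (σ → ℂ)} [CompactSpace ↥(K₁ ∪ K₂)]

theorem mem_polynomialClosure_union [CompactSpace K₁] [CompactSpace K₂]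
    {e : C(↥(K₁ ∪ K₂), ℂ)} (heP : e ∈ polynomialClosure (K₁ ∪ K₂))
    (he₁ : ∀ z, z.1 ∈ K₁ → e z = 0) (he₂ : ∀ z, z.1 ∈ K₂ → e z = 1)
    {f : C(↥(K₁ ∪ K₂), ℂ)}
    (hf₁ : f.comp (.inclusion subset_union_left) ∈ polynomialClosure K₁)
    (hf₂ : f.comp (.inclusion subset_union_right) ∈ polynomialClosure K₂) :
    f ∈ polynomialClosure (K₁ ∪ K₂) := by
  rw [mem_polynomialClosure_iff] at hf₁ hf₂
  refine Metric.mem_of_closed' isClosed_polynomialClosure |>.2 fun ε hε ↦ ?_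
  obtain ⟨Q₁, hQ₁⟩ := hf₁ ε hε
  obtain ⟨Q₂, hQ₂⟩ := hf₂ ε hε
  have mem (Q : MvPolynomial σ ℂ) := polynomialRestriction_mem (K := K₁ ∪ K₂) Q
  refine ⟨_, add_mem (mem Q₁) (mul_mem heP (sub_mem (mem Q₂) (mem Q₁))), ?_⟩
  refine (ContinuousMap.dist_lt_iff hε).2 fun z ↦ ?_
  rw [dist_eq_norm]
  rcases z.2 with hz | hz
  · have hQz : ‖f z - MvPolynomial.eval z.1 Q₁‖ < ε := hQ₁ ⟨z, hz⟩
    simpa [he₁ z hz, polynomialRestriction_apply] using hQz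
  · have hQz : ‖f z - MvPolynomial.eval z.1 Q₂‖ < ε := hQ₂ ⟨z, hz⟩
    simpa [he₂ z hz, polynomialRestriction_apply] using hQz

theorem exists_mem_polynomialClosure_separating [Finite σ] (hK₁ : IsCompact K₁)
    (hK₁cv : Convex ℝ K₁) (hK₂ : IsClosed K₂) (hK₂cv : Convex ℝ K₂) (hdisj : Disjoint K₁ K₂) :
    ∃ e ∈ polynomialClosure (K₁ ∪ K₂), (∀ z, z.1 ∈ K₁ → e z = 0) ∧ ∀ z, z.1 ∈ K₂ → e z = 1 := by
  obtain ⟨L, a, b, hL₁, hab, hL₂⟩ :=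
    RCLike.geometric_hahn_banach_compact_closed (𝕜 := ℂ) hK₁cv hK₁ hK₂cv hK₂ hdisj
  simp only [RCLike.re_to_complex] at hL₁ hL₂
  let Lres : C(↥(K₁ ∪ K₂), ℂ) := ⟨fun z ↦ L z, by fun_prop⟩
  let u : polynomialClosure (K₁ ∪ K₂) :=
    ⟨Lres, mem_polynomialClosure_of_continuousLinearMap L fun _ ↦ rfl⟩ - algebraMap ℂ _ (a : ℂ)
  have u_re (z) : ((u : C(↥(K₁ ∪ K₂), ℂ)) z).re = (L z).re - a := rfl
  have neg (z : ↥(K₁ ∪ K₂)) (hz : z.1 ∈ K₁) : (u.1 z).re < 0 := by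
    linarith [u_re z, hL₁ z hz]
  have pos (z : ↥(K₁ ∪ K₂)) (hz : z.1 ∈ K₂) : 0 < (u.1 z).re := by
    linarith [u_re z, hL₂ z hz]
  obtain ⟨e, heP, he⟩ := exists_mem_eq_ite_re isClosed_polynomialClosure u fun z ↦
    z.2.elim (fun hz ↦ (neg z hz).ne) fun hz ↦ (pos z hz).ne'
  exact ⟨e, heP, fun z hz ↦ (he z).trans (if_pos (neg z hz).le),
    fun z hz ↦ (he z).trans (if_neg (pos z hz).not_ge)⟩

end Union

theorem okaWeil_two_convex_general {σ : Type*} [Finite σ] {K₁ K₂ : Set (σ → ℂ)}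
    (hK₁cpt : IsCompact K₁) (hK₁cv : Convex ℝ K₁) (hK₂cpt : IsCompact K₂) (hK₂cv : Convex ℝ K₂)
    (hdisj : Disjoint K₁ K₂) {V : Set (σ → ℂ)} (hV : IsOpen V) (hKV : K₁ ∪ K₂ ⊆ V)
    {h : (σ → ℂ) → ℂ} (hh : DifferentiableOn ℂ h V) {ε : ℝ} (hε : 0 < ε) :
    ∃ Q : MvPolynomial σ ℂ, ∀ z ∈ K₁ ∪ K₂, ‖h z - MvPolynomial.eval z Q‖ < ε := by
  have := isCompact_iff_compactSpace.1 hK₁cpt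
  have := isCompact_iff_compactSpace.1 hK₂cpt
  have := isCompact_iff_compactSpace.1 (hK₁cpt.union hK₂cpt)
  let f : C(↥(K₁ ∪ K₂), ℂ) := ⟨_, (hh.continuousOn.mono hKV).domRestrict⟩
  have hf₁ : f.comp (.inclusion subset_union_left) ∈ polynomialClosure K₁ :=
    mem_polynomialClosure_of_convex hK₁cv hV (subset_union_left.trans hKV) hh fun _ ↦ rfl
  have hf₂ : f.comp (.inclusion subset_union_right) ∈ polynomialClosure K₂ :=
    mem_polynomialClosure_of_convex hK₂cv hV (subset_union_right.trans hKV) hh fun _ ↦ rfl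
  obtain ⟨e, heP, he₁, he₂⟩ :=
    exists_mem_polynomialClosure_separating hK₁cpt hK₁cv hK₂cpt.isClosed hK₂cv hdisj
  obtain ⟨Q, hQ⟩ :=
    mem_polynomialClosure_iff.1 (mem_polynomialClosure_union heP he₁ he₂ hf₁ hf₂) ε hε
  exact ⟨Q, fun z hz ↦ hQ ⟨z, hz⟩⟩

/-- Oka–Weil approximation on the union of two disjoint compact convex sets. -/
theorem okaWeil_two_convex (n : ℕ) (K₁ K₂ : Set (Fin n → ℂ))
    (hK₁cpt : IsCompact K₁) (hK₁cv : Convex ℝ K₁)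
    (hK₂cpt : IsCompact K₂) (hK₂cv : Convex ℝ K₂)
    (hdisj : Disjoint K₁ K₂)
    (V : Set (Fin n → ℂ)) (hV : IsOpen V) (hKV : K₁ ∪ K₂ ⊆ V)
    (h : (Fin n → ℂ) → ℂ) (hh : DifferentiableOn ℂ h V)
    (ε : ℝ) (hε : 0 < ε) :
    ∃ Q : MvPolynomial (Fin n) ℂ, ∀ z ∈ K₁ ∪ K₂, ‖h z - mvEval Q z‖ < ε :=
  okaWeil_two_convex_general hK₁cpt hK₁cv hK₂cpt hK₂cv hdisj hV hKV hh hε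

end
end

section
/- Let Ω₁ and Ω₂ be two disjoint open convex subsets of ℂⁿ and let f be holomorphic on Ω₁ ∪ Ω₂. Then for every compact set L ⊆ Ω₁ ∪ Ω₂, every finite set F of multi-indices in ℕⁿ, and every ε > 0, there exists a holomorphic polynomial Q on ℂⁿ such that sup_{z ∈ L} ‖D^ℓ f(z) − D^ℓ Q(z)‖ < ε for every ℓ ∈ F (in particular, taking ℓ = 0, Q approximates f itself uniformly on L). -/
open Set Filter Topology

noncomputable section

/-!
Let `K` be a compact subset of `Ω₁ ∪ Ω₂` containing `L` in its interior, and let `S` be the closure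
in `C(K, ℂ)` of the polynomials. If `g : C(K, ℂᵐ)` has its coordinates in `S` and takes values in an
open set which is star-shaped about `c` and on which `h` is holomorphic, then `h ∘ g ∈ S`: the curve
`r ↦ h ∘ (c + r (g - c))` in `C(K, ℂ)` is analytic with all its derivatives at `r = 0` in `S`, so
the identity theorem in `C(K, ℂ) ⧸ S` puts its value at `r = 1` in `S`.

A functional separating `Ω₁` from `Ω₂` gives `w ∈ S` with `Re w` negative on `Ω₁` and positive on
`Ω₂`. Applying the above to `z ↦ z ^ (-1 / 2)` on the slit plane shows that the sign
`w (w²) ^ (-1 / 2)` of `Re w`, hence the indicator `χ` of `K ∩ Ω₂`, is in `S`. Using `χ` to move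
the points of `K` outside `Ωᵢ` to a fixed point of `Ωᵢ`, one gets `f ∈ S` from the two convex cases.
Cauchy estimates on the interior of `K` then control the partial derivatives.
-/

section CauchyEstimates

open Metric

variable {E F : Type*} [NormedAddCommGroup E] [NormedSpace ℂ E] [NormedAddCommGroup F]
  [NormedSpace ℂ F] {f : E → F} {Ω : Set E} {p : E}

lemma norm_fderiv_le_of_forall_mem_ball_norm_le {r M : ℝ} (hr : 0 < r)
    (hf : DifferentiableOn ℂ f (ball p r)) (hM : ∀ z ∈ ball p r, ‖f z‖ ≤ M) :
    ‖fderiv ℂ f p‖ ≤ 2 * M / r :=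
  Complex.norm_fderiv_le_div_of_mapsTo_ball hf (fun z hz ↦ mem_closedBall_iff_norm.2 <|
    (norm_sub_le _ _).trans <| by linarith [hM z hz, hM p (mem_ball_self hr)]) hr

lemma exists_lipschitzOnWith_ball (hΩ : IsOpen Ω) (hf : DifferentiableOn ℂ f Ω) (hp : p ∈ Ω) :
    ∃ C, ∃ r > 0, ball p r ⊆ Ω ∧ LipschitzOnWith C f (ball p r) := by
  obtain ⟨s, hs, hsΩ, hbdd⟩ : ∃ s > 0, ball p s ⊆ Ω ∧ ∀ z ∈ ball p s, ‖f z‖ ≤ ‖f p‖ + 1 := by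
    have hlt := (hf.continuousOn.continuousAt (hΩ.mem_nhds hp)).norm.eventually_lt_const
      (lt_add_one ‖f p‖)
    obtain ⟨s, hs, hsub⟩ := Metric.mem_nhds_iff.1 (inter_mem (hΩ.mem_nhds hp) hlt)
    exact ⟨s, hs, fun z hz ↦ (hsub hz).1, fun z hz ↦ le_of_lt (hsub hz).2⟩
  have hsmall : ball p (s / 2) ⊆ ball p s := ball_subset_ball (by linarith)
  have hderiv (z : E) (hz : z ∈ ball p (s / 2)) :
      ‖fderiv ℂ f z‖ ≤ 2 * (‖f p‖ + 1) / (s / 2) := by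
    have hzs : ball z (s / 2) ⊆ ball p s :=
      ball_subset_ball' (by linarith [mem_ball.1 hz])
    exact norm_fderiv_le_of_forall_mem_ball_norm_le (half_pos hs)
      (hf.mono (hzs.trans hsΩ)) fun w hw ↦ hbdd w (hzs hw)
  refine ⟨⟨2 * (‖f p‖ + 1) / (s / 2), by positivity⟩, s / 2, half_pos hs, hsmall.trans hsΩ, ?_⟩
  exact (convex_ball p _).lipschitzOnWith_of_nnnorm_fderiv_le (𝕜 := ℂ)
    (fun z hz ↦ hf.differentiableAt (hΩ.mem_nhds (hsΩ (hsmall hz)))) hderiv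

lemma exists_lipschitzOnWith_ball_fderiv (hΩ : IsOpen Ω) (hf : DifferentiableOn ℂ f Ω)
    (hp : p ∈ Ω) :
    ∃ C, ∃ r > 0, ball p r ⊆ Ω ∧ LipschitzOnWith C (fderiv ℂ f) (ball p r) := by
  obtain ⟨C, s, hs, hsΩ, hLip⟩ := exists_lipschitzOnWith_ball hΩ hf hp
  have hdiff (z : E) (hz : z ∈ ball p s) : DifferentiableAt ℂ f z :=
    hf.differentiableAt (hΩ.mem_nhds (hsΩ hz))
  have hhalf : ball p (s / 2) ⊆ ball p s := ball_subset_ball (by linarith)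
  refine ⟨C * (2 / (s / 2)).toNNReal, s / 2, half_pos hs, hhalf.trans hsΩ,
    LipschitzOnWith.of_dist_le_mul fun x hx y hy ↦ ?_⟩
  have hball {w : E} (hw : w ∈ ball p (s / 2)) : ball w (s / 2) ⊆ ball p s :=
    ball_subset_ball' (by linarith [mem_ball.1 hw])
  have hshift {z : E} (hz : z ∈ ball x (s / 2)) : z + (y - x) ∈ ball p s := by
    refine hball hy (mem_ball_iff_norm.2 ?_)
    rwa [add_sub_assoc, sub_sub_cancel_left, ← sub_eq_add_neg, ← mem_ball_iff_norm]
  have hdiff_shift {z : E} (hz : z ∈ ball x (s / 2)) :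
      DifferentiableAt ℂ (fun z ↦ f (z + (y - x))) z :=
    (hdiff _ (hshift hz)).comp z (differentiableAt_id.add_const _)
  have hcauchy := norm_fderiv_le_of_forall_mem_ball_norm_le (half_pos hs)
    (f := fun z ↦ f (z + (y - x)) - f z) (M := C * dist x y)
    (fun z hz ↦ ((hdiff_shift hz).sub (hdiff z (hball hx hz))).differentiableWithinAt)
    (fun z hz ↦ by
      simpa [dist_eq_norm, norm_sub_rev y x] using
        hLip.dist_le_mul _ (hshift hz) _ (hball hx hz))
  have hx₀ : x ∈ ball x (s / 2) := mem_ball_self (half_pos hs)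
  rw [fderiv_fun_sub (hdiff_shift hx₀) (hdiff x (hhalf hx)), fderiv_comp_add_right,
    add_sub_cancel] at hcauchy
  rw [dist_comm, dist_eq_norm, NNReal.coe_mul, Real.coe_toNNReal _ (by positivity)]
  calc _ ≤ _ := hcauchy
    _ = _ := by ring

lemma tendstoUniformlyOn_fderiv {ι : Type*} {l : Filter ι} {u : ι → E → F} {r : ℝ}
    (hr : 0 < r) (hd : ∀ᶠ k in l, DifferentiableOn ℂ (u k) (ball p r))
    (hf : DifferentiableOn ℂ f (ball p r)) (hu : TendstoUniformlyOn u f l (ball p r)) :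
    TendstoUniformlyOn (fun k ↦ fderiv ℂ (u k)) (fderiv ℂ f) l (ball p (r / 2)) := by
  rw [Metric.tendstoUniformlyOn_iff] at hu ⊢
  intro ε hε
  filter_upwards [hd, hu (ε * r / 8) (by positivity)] with k hdk huk z hz
  have hsub : ball z (r / 2) ⊆ ball p r := ball_subset_ball' (by linarith [mem_ball.1 hz])
  have hnhds : ball p r ∈ 𝓝 z := isOpen_ball.mem_nhds (hsub (mem_ball_self (half_pos hr)))
  have hcauchy := norm_fderiv_le_of_forall_mem_ball_norm_le (half_pos hr)
    ((hf.sub hdk).mono hsub) (M := ε * r / 8) fun w hw ↦ by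
      simpa [dist_eq_norm] using (huk w (hsub hw)).le
  rw [fderiv_sub (hf.differentiableAt hnhds) (hdk.differentiableAt hnhds), ← dist_eq_norm]
    at hcauchy
  calc dist (fderiv ℂ f z) (fderiv ℂ (u k) z) ≤ 2 * (ε * r / 8) / (r / 2) := hcauchy
    _ = ε / 2 := by field_simp; norm_num
    _ < ε := half_lt_self hε

lemma uniformCauchySeqOn_fderiv {ι : Type*} {l : Filter ι} {u : ι → E → F} {r : ℝ}
    (hr : 0 < r) (hd : ∀ᶠ k in l, DifferentiableOn ℂ (u k) (ball p r))
    (hu : UniformCauchySeqOn u l (ball p r)) :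
    UniformCauchySeqOn (fun k ↦ fderiv ℂ (u k)) l (ball p (r / 2)) := by
  rw [SeminormedAddGroup.uniformCauchySeqOn_iff_tendstoUniformlyOn_zero] at hu ⊢
  have hd₂ : ∀ᶠ k in l ×ˢ l, DifferentiableOn ℂ (u k.1) (ball p r) ∧
      DifferentiableOn ℂ (u k.2) (ball p r) := hd.prod_mk hd
  have hlim := tendstoUniformlyOn_fderiv hr (hd₂.mono fun k hk ↦ hk.1.neg.add hk.2)
    (differentiableOn_const 0) hu
  rw [fderiv_fun_const] at hlim
  refine hlim.congr ?_
  filter_upwards [hd₂] with k hk z hz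
  have hnhds : ball p r ∈ 𝓝 z :=
    isOpen_ball.mem_nhds (ball_subset_ball (half_le_self hr.le) hz)
  have hfst := hk.1.differentiableAt hnhds
  exact (fderiv_add hfst.neg (hk.2.differentiableAt hnhds)).trans (by rw [fderiv_neg])

lemma differentiableAt_of_tendstoUniformlyOn_ball [CompleteSpace F] {ι : Type*} {l : Filter ι}
    [l.NeBot] {u : ι → E → F} {r : ℝ} (hr : 0 < r)
    (hd : ∀ᶠ k in l, DifferentiableOn ℂ (u k) (ball p r))
    (hu : TendstoUniformlyOn u f l (ball p r)) : DifferentiableAt ℂ f p := by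
  have hcauchy := uniformCauchySeqOn_fderiv hr hd hu.uniformCauchySeqOn
  have hlim (z : E) : ∃ f', z ∈ ball p (r / 2) → Tendsto (fun k ↦ fderiv ℂ (u k) z) l (𝓝 f') := by
    by_cases hz : z ∈ ball p (r / 2)
    · exact (CompleteSpace.complete (hcauchy.cauchy_map hz)).imp fun _ h _ ↦ h
    · exact ⟨0, fun h ↦ absurd h hz⟩
  choose f' hf' using hlim
  have hderiv := (hcauchy.tendstoUniformlyOn_of_tendsto hf').tendstoUniformlyOnFilter.mono_right
    (le_principal_iff.2 (ball_mem_nhds p (half_pos hr)))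
  refine (hasFDerivAt_of_tendstoUniformlyOnFilter (f := u) hderiv ?_ ?_).differentiableAt
  · filter_upwards [hd.prod_mk (ball_mem_nhds p hr)] with ⟨k, z⟩ ⟨hdk, hz⟩
    exact (hdk.differentiableAt (isOpen_ball.mem_nhds hz)).hasFDerivAt
  · filter_upwards [ball_mem_nhds p hr] with z hz using hu.tendsto_at hz

lemma eventually_add_smul_mem_ball {r : ℝ} (hr : 0 < r) (v : E) :
    ∀ᶠ h : ℂ in 𝓝 0, ∀ z ∈ ball p (r / 2), z + h • v ∈ ball p r := by
  have hcont : Tendsto (fun h : ℂ ↦ h • v) (𝓝 0) (𝓝 0) := by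
    have : Continuous fun h : ℂ ↦ h • v := by fun_prop
    simpa using this.tendsto 0
  filter_upwards [hcont (ball_mem_nhds 0 (half_pos hr))] with h hh z hz
  calc dist (z + h • v) p ≤ dist (z + h • v) z + dist z p := dist_triangle ..
    _ < r / 2 + r / 2 := add_lt_add (by simpa [dist_eq_norm] using hh) hz
    _ = r := add_halves r

lemma tendstoUniformlyOn_inv_smul_sub_fderiv_apply {C : NNReal} {r : ℝ} (hr : 0 < r)
    (hf : DifferentiableOn ℂ f (ball p r)) (hLip : LipschitzOnWith C (fderiv ℂ f) (ball p r))
    (v : E) :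
    TendstoUniformlyOn (fun (h : ℂ) z ↦ h⁻¹ • (f (z + h • v) - f z)) (fun z ↦ fderiv ℂ f z v)
      (𝓝[≠] 0) (ball p (r / 2)) := by
  have hbound : Tendsto (fun h : ℂ ↦ C * ‖h‖ * ‖v‖ ^ 2) (𝓝[≠] 0) (𝓝 0) := by
    have : Continuous fun h : ℂ ↦ C * ‖h‖ * ‖v‖ ^ 2 := by fun_prop
    simpa using (this.tendsto 0).mono_left nhdsWithin_le_nhds
  rw [Metric.tendstoUniformlyOn_iff]
  intro ε hε
  filter_upwards [self_mem_nhdsWithin, (eventually_add_smul_mem_ball hr v).filter_mono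
    nhdsWithin_le_nhds, hbound.eventually_lt_const hε] with h (hh : h ≠ 0) hmem hlt z hz
  have hseg : segment ℝ z (z + h • v) ⊆ ball p r :=
    (convex_ball p r).segment_subset (ball_subset_ball (half_le_self hr.le) hz) (hmem z hz)
  have hmvt := (convex_segment z (z + h • v)).norm_image_sub_le_of_norm_fderiv_le' (𝕜 := ℂ)
    (fun w hw ↦ hf.differentiableAt (isOpen_ball.mem_nhds (hseg hw)))
    (fun w hw ↦ (hLip.norm_sub_le (hseg hw) (hseg (left_mem_segment ℝ ..))).trans
      (mul_le_mul_of_nonneg_left (norm_sub_le_of_mem_segment hw) C.2))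
    (left_mem_segment ℝ ..) (right_mem_segment ℝ ..)
  rw [add_sub_cancel_left, map_smul, norm_smul] at hmvt
  calc dist (fderiv ℂ f z v) (h⁻¹ • (f (z + h • v) - f z))
      = ‖h⁻¹ • (f (z + h • v) - f z - h • fderiv ℂ f z v)‖ := by
        rw [dist_comm, dist_eq_norm, smul_sub _ (_ - _), inv_smul_smul₀ hh]
    _ ≤ ‖h‖⁻¹ * (C * (‖h‖ * ‖v‖) * (‖h‖ * ‖v‖)) := by
        rw [norm_smul, norm_inv]; gcongr
    _ = C * ‖h‖ * ‖v‖ ^ 2 := by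
        have := norm_ne_zero_iff.2 hh
        field_simp
    _ < ε := hlt

lemma differentiableOn_fderiv_apply [CompleteSpace F] (hΩ : IsOpen Ω)
    (hf : DifferentiableOn ℂ f Ω) (v : E) : DifferentiableOn ℂ (fun z ↦ fderiv ℂ f z v) Ω := by
  intro p hp
  obtain ⟨C, r, hr, hrΩ, hLip⟩ := exists_lipschitzOnWith_ball_fderiv hΩ hf hp
  replace hf := hf.mono hrΩ
  refine (differentiableAt_of_tendstoUniformlyOn_ball (half_pos hr) ?_
    (tendstoUniformlyOn_inv_smul_sub_fderiv_apply hr hf hLip v)).differentiableWithinAt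
  filter_upwards [(eventually_add_smul_mem_ball hr v).filter_mono nhdsWithin_le_nhds] with h hmem
  exact ((hf.comp (differentiableOn_id.add_const _) hmem).sub
    (hf.mono (ball_subset_ball (half_le_self hr.le)))).const_smul h⁻¹

lemma tendstoLocallyUniformlyOn_fderiv [LocallyCompactSpace E] {ι : Type*} {l : Filter ι}
    {u : ι → E → F} (hΩ : IsOpen Ω) (hu : ∀ᶠ k in l, DifferentiableOn ℂ (u k) Ω)
    (hf : DifferentiableOn ℂ f Ω) (h : TendstoLocallyUniformlyOn u f l Ω) :
    TendstoLocallyUniformlyOn (fun k ↦ fderiv ℂ (u k)) (fderiv ℂ f) l Ω := by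
  refine tendstoLocallyUniformlyOn_of_forall_exists_nhds fun p hp ↦ ?_
  obtain ⟨K, hK, hKΩ, hKcomp⟩ := local_compact_nhds (hΩ.mem_nhds hp)
  obtain ⟨r, hr, hrK⟩ := Metric.mem_nhds_iff.1 hK
  have hrΩ := hrK.trans hKΩ
  have hunif := (tendstoLocallyUniformlyOn_iff_forall_isCompact hΩ).1 h K hKΩ hKcomp
  exact ⟨ball p (r / 2), mem_nhdsWithin_of_mem_nhds (ball_mem_nhds p (half_pos hr)),
    tendstoUniformlyOn_fderiv hr (hu.mono fun _ hd ↦ hd.mono hrΩ) (hf.mono hrΩ) (hunif.mono hrK)⟩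

end CauchyEstimates

open Metric in
lemma hasDerivAt_of_forall_hasDerivAt_apply {𝕜 X F : Type*} [RCLike 𝕜] [TopologicalSpace X]
    [CompactSpace X] [NormedAddCommGroup F] [NormedSpace 𝕜 F] {G G' : 𝕜 → C(X, F)} {r₀ : 𝕜}
    (hG : ∀ᶠ r in 𝓝 r₀, ∀ x, HasDerivAt (fun r ↦ G r x) (G' r x) r) (hG' : ContinuousAt G' r₀) :
    HasDerivAt G (G' r₀) r₀ := by
  refine hasDerivAt_iff_isLittleO.2 (Asymptotics.isLittleO_iff.2 fun ε hε ↦ ?_)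
  obtain ⟨δ, hδ, hball⟩ := Metric.mem_nhds_iff.1 (hG.and (hG' (closedBall_mem_nhds _ hε)))
  filter_upwards [ball_mem_nhds r₀ hδ] with r hr
  refine (ContinuousMap.norm_le _ (by positivity)).2 fun x ↦ ?_
  have hmvt := (convex_ball r₀ δ).norm_image_sub_le_of_norm_hasDerivWithin_le
    (f := fun r ↦ G r x - r • G' r₀ x) (f' := fun r ↦ G' r x - G' r₀ x) (C := ε)
    (fun s hs ↦ by
      simpa using
        (((hball hs).1 x).fun_sub ((hasDerivAt_id s).smul_const (G' r₀ x))).hasDerivWithinAt)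
    (fun s hs ↦ ((G' s - G' r₀).norm_coe_le_norm x).trans
      (mem_closedBall_iff_norm.1 (hball hs).2))
    (mem_ball_self hδ) hr
  simpa [sub_smul, sub_sub_sub_comm] using hmvt

section Superposition

variable {X E F : Type*} [TopologicalSpace X] [TopologicalSpace E] [TopologicalSpace F] [Zero F]
  {f : E → F} {Ω : Set E}

/-- The superposition (Nemytskii) operator `g ↦ f ∘ g` on continuous maps. The function `f` need
only be continuous on the range of `g`; if `f ∘ g` is not continuous the value is `0`. -/
def superposition (f : E → F) (g : C(X, E)) : C(X, F) :=
  ContinuousMap.mkD (f ∘ g) 0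

lemma superposition_apply (hf : ContinuousOn f Ω) {g : C(X, E)} (hg : ∀ x, g x ∈ Ω) (x : X) :
    superposition f g x = f (g x) :=
  ContinuousMap.mkD_apply_of_continuous (hf.comp_continuous g.continuous hg)

lemma superposition_const (f : E → F) (c : E) :
    superposition f (ContinuousMap.const X c) = ContinuousMap.const X (f c) :=
  ContinuousMap.mkD_of_continuous (f := fun _ : X ↦ f c) continuous_const

lemma continuousOn_superposition [LocallyCompactSpace X] (hf : ContinuousOn f Ω) :
    ContinuousOn (superposition (X := X) f) {g | ∀ x, g x ∈ Ω} :=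
  ContinuousMap.continuousOn_mkD_of_uncurry (fun g : C(X, E) ↦ f ∘ g) 0 <|
    hf.comp (t := Ω) (f := fun p : C(X, E) × X ↦ p.1 p.2) (by fun_prop) fun p hp ↦ hp.1 p.2

end Superposition

section Line

variable {X E : Type*} [TopologicalSpace X] [CompactSpace X] [NormedAddCommGroup E]
  [NormedSpace ℂ E] {f : E → ℂ} {Ω : Set E}

lemma isOpen_setOf_forall_add_smul_mem (hΩ : IsOpen Ω) (g y : C(X, E)) :
    IsOpen {r : ℂ | ∀ x, (g + r • y) x ∈ Ω} := by
  have hmaps := ContinuousMap.isOpen_setOfPred_mapsTo (X := X) isCompact_univ hΩ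
  have hline : Continuous fun r : ℂ ↦ g + r • y := by fun_prop
  simpa [MapsTo] using hmaps.preimage hline

variable [LocallyCompactSpace X] [FiniteDimensional ℂ E]

lemma hasDerivAt_superposition_add_smul (hΩ : IsOpen Ω) (hf : DifferentiableOn ℂ f Ω)
    {ι : Type*} [Fintype ι] (b : Module.Basis ι ℂ E) (g y : C(X, E)) {r₀ : ℂ}
    (hr₀ : ∀ x, (g + r₀ • y) x ∈ Ω) :
    HasDerivAt (fun r : ℂ ↦ superposition f (g + r • y))
      (∑ i, ((b.coord i).toContinuousLinearMap : C(E, ℂ)).comp y *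
        superposition (fun z ↦ fderiv ℂ f z (b i)) (g + r₀ • y)) r₀ := by
  have hopen := isOpen_setOf_forall_add_smul_mem hΩ g y
  have hpartial (i : ι) : ContinuousOn (fun z ↦ fderiv ℂ f z (b i)) Ω :=
    (differentiableOn_fderiv_apply hΩ hf (b i)).continuousOn
  have hcoord (z v : E) : ∑ i, b.coord i v * fderiv ℂ f z (b i) = fderiv ℂ f z v := by
    conv_rhs => rw [← b.sum_repr v, map_sum]
    simp only [map_smul, smul_eq_mul, Module.Basis.coord_apply]
  refine hasDerivAt_of_forall_hasDerivAt_apply (G' := fun r ↦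
    ∑ i, ((b.coord i).toContinuousLinearMap : C(E, ℂ)).comp y *
        superposition (fun z ↦ fderiv ℂ f z (b i)) (g + r • y)) ?_ ?_
  · filter_upwards [hopen.mem_nhds hr₀] with r hr x
    have hline : HasDerivAt (fun s : ℂ ↦ g x + s • y x) (y x) r := by
      simpa using ((hasDerivAt_id r).smul_const (y x)).const_add (g x)
    have hchain := (hf.differentiableAt (hΩ.mem_nhds (hr x))).hasFDerivAt.comp_hasDerivAt r hline
    have hvalue : (∑ i, ((b.coord i).toContinuousLinearMap : C(E, ℂ)).comp y *
        superposition (fun z ↦ fderiv ℂ f z (b i)) (g + r • y)) x =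
        fderiv ℂ f ((g + r • y) x) (y x) := by
      rw [← hcoord]
      simp [ContinuousMap.sum_apply, superposition_apply (hpartial _) hr]
    rw [hvalue]
    refine hchain.congr_of_eventuallyEq ?_
    filter_upwards [hopen.mem_nhds hr] with s hs using superposition_apply hf.continuousOn hs x
  · have hline : Continuous fun r : ℂ ↦ g + r • y := by fun_prop
    have hcont (i : ι) := ((continuousOn_superposition (hpartial i)).comp hline.continuousOn
      (s := {r : ℂ | ∀ x, (g + r • y) x ∈ Ω}) fun r hr ↦ hr).continuousAt (hopen.mem_nhds hr₀)
    exact tendsto_finsetSum _ fun i _ ↦ (hcont i).const_mul _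

lemma differentiableOn_superposition_add_smul (hΩ : IsOpen Ω) (hf : DifferentiableOn ℂ f Ω)
    (g y : C(X, E)) :
    DifferentiableOn ℂ (fun r : ℂ ↦ superposition f (g + r • y))
      {r | ∀ x, (g + r • y) x ∈ Ω} := fun _ hr ↦
  (hasDerivAt_superposition_add_smul hΩ hf (Module.finBasis ℂ E) g y
    hr).differentiableAt.differentiableWithinAt

end Line

lemma mem_of_forall_iteratedDeriv_mem {V : Type*} [NormedAddCommGroup V] [NormedSpace ℂ V]
    [CompleteSpace V] {S : Submodule ℂ V} (hS : IsClosed (S : Set V)) {G : ℂ → V} {U : Set ℂ}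
    (hU : IsPreconnected U) (hG : AnalyticOnNhd ℂ G U) {z₀ z : ℂ} (hz₀ : z₀ ∈ U)
    (hmem : ∀ m, iteratedDeriv m G z₀ ∈ S) (hz : z ∈ U) : G z ∈ S := by
  have hquot : AnalyticOnNhd ℂ (S.mkQL ∘ G) U := S.mkQL.comp_analyticOnNhd hG
  have hderiv (m : ℕ) : iteratedDeriv m (S.mkQL ∘ G) z₀ = 0 := by
    rw [iteratedDeriv_eq_iteratedFDeriv,
      S.mkQL.iteratedFDeriv_comp_left (hG z₀ hz₀).contDiffAt le_rfl]
    exact (Submodule.Quotient.mk_eq_zero S).2 (hmem m)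
  have horder : analyticOrderAt (S.mkQL ∘ G) z₀ = ⊤ := ENat.eq_top_iff_forall_ge.2 fun m ↦
    (natCast_le_analyticOrderAt_iff_iteratedDeriv_eq_zero (hquot z₀ hz₀)).2 fun i _ ↦ hderiv i
  have hzero := hquot.eqOn_zero_of_preconnected_of_eventuallyEq_zero hU hz₀
    (analyticOrderAt_eq_top.1 horder)
  exact (Submodule.Quotient.mk_eq_zero S).1 (hzero hz)

lemma sq_mem_slitPlane {z : ℂ} (hz : z.re ≠ 0) : z ^ 2 ∈ Complex.slitPlane := by
  by_cases him : z.im = 0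
  · exact .inl (by simpa [sq, him] using mul_self_pos.2 hz)
  · exact .inr (by simp [sq, hz, him, ← two_mul, mul_comm z.im])

section ClosedSubalgebra

variable {X E : Type*} [TopologicalSpace X] [NormedAddCommGroup E] [NormedSpace ℂ E]

/-- An `E`-valued map is weakly in the function algebra `S` if its composition with every
continuous linear functional lies in `S`. For `E = ℂⁿ` this says that all `n` coordinates belong
to `S`, without singling out a basis. -/
def WeaklyMem (S : Subalgebra ℂ C(X, ℂ)) (g : C(X, E)) : Prop :=
  ∀ φ : StrongDual ℂ E, (φ : C(E, ℂ)).comp g ∈ S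

variable {S : Subalgebra ℂ C(X, ℂ)} {Ω : Set E} {f : E → ℂ} {g h : C(X, E)}

lemma const_mem (S : Subalgebra ℂ C(X, ℂ)) (c : ℂ) : ContinuousMap.const X c ∈ S :=
  S.algebraMap_mem c

lemma weaklyMem_const (S : Subalgebra ℂ C(X, ℂ)) (c : E) :
    WeaklyMem S (ContinuousMap.const X c) := fun φ ↦ const_mem S (φ c)

lemma weaklyMem_of_mem {w : C(X, ℂ)} (hw : w ∈ S) : WeaklyMem S w := fun φ ↦ by
  have hmul : (φ : C(ℂ, ℂ)).comp w = φ 1 • w := by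
    ext x
    simpa [mul_comm] using φ.map_smul (w x) 1
  exact hmul ▸ S.smul_mem hw _

lemma WeaklyMem.add (hg : WeaklyMem S g) (hh : WeaklyMem S h) : WeaklyMem S (g + h) := fun φ ↦ by
  have hadd : (φ : C(E, ℂ)).comp (g + h) = (φ : C(E, ℂ)).comp g + (φ : C(E, ℂ)).comp h := by
    ext; simp
  exact hadd ▸ S.add_mem (hg φ) (hh φ)

lemma WeaklyMem.sub (hg : WeaklyMem S g) (hh : WeaklyMem S h) : WeaklyMem S (g - h) := fun φ ↦ by
  have hsub : (φ : C(E, ℂ)).comp (g - h) = (φ : C(E, ℂ)).comp g - (φ : C(E, ℂ)).comp h := by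
    ext; simp
  exact hsub ▸ S.sub_mem (hg φ) (hh φ)

lemma WeaklyMem.smul {χ : C(X, ℂ)} (hχ : χ ∈ S) (hg : WeaklyMem S g) :
    WeaklyMem S (χ • g) := fun φ ↦ by
  have hsmul : (φ : C(E, ℂ)).comp (χ • g) = χ * (φ : C(E, ℂ)).comp g := by
    ext; simp
  exact hsmul ▸ S.mul_mem hχ (hg φ)

variable [CompactSpace X] [LocallyCompactSpace X] [FiniteDimensional ℂ E]

lemma iteratedDeriv_superposition_const_add_smul_mem (hΩ : IsOpen Ω) {c : E} (hc : c ∈ Ω)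
    (hg : WeaklyMem S g) (m : ℕ) (hf : DifferentiableOn ℂ f Ω) :
    iteratedDeriv m (fun r : ℂ ↦ superposition f (ContinuousMap.const X c + r • g)) 0 ∈ S := by
  have hzero (x : X) : (ContinuousMap.const X c + (0 : ℂ) • g) x ∈ Ω := by simpa using hc
  have hopen := isOpen_setOf_forall_add_smul_mem hΩ (ContinuousMap.const X c) g
  let b := Module.finBasis ℂ E
  induction m generalizing f with
  | zero => simpa [superposition_const] using const_mem S (f c)
  | succ m ih =>
    have hpartial (i) := differentiableOn_fderiv_apply hΩ hf (b i)
    have hderiv : deriv (fun r : ℂ ↦ superposition f (ContinuousMap.const X c + r • g)) =ᶠ[𝓝 0]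
        fun r ↦ ∑ i, ((b.coord i).toContinuousLinearMap : C(E, ℂ)).comp g *
          superposition (fun z ↦ fderiv ℂ f z (b i)) (ContinuousMap.const X c + r • g) := by
      filter_upwards [hopen.mem_nhds hzero] with r hr using
        (hasDerivAt_superposition_add_smul hΩ hf b _ g hr).deriv
    have hsmooth (i) : ContDiffAt ℂ m (fun r : ℂ ↦
        superposition (fun z ↦ fderiv ℂ f z (b i)) (ContinuousMap.const X c + r • g)) 0 :=
      ((differentiableOn_superposition_add_smul hΩ (hpartial i) _ g).analyticOnNhd hopen 0
        hzero).contDiffAt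
    rw [iteratedDeriv_succ', hderiv.iteratedDeriv_eq,
      iteratedDeriv_fun_sum fun i _ ↦ contDiffAt_const.mul (hsmooth i)]
    refine S.sum_mem fun i _ ↦ ?_
    rw [iteratedDeriv_const_mul _ (hsmooth i)]
    exact S.mul_mem (hg _) (ih (hpartial i))

lemma superposition_mem_of_starConvex (hS : IsClosed (S : Set C(X, ℂ))) {c : E} (hc : c ∈ Ω)
    (hstar : StarConvex ℝ c Ω) (hΩ : IsOpen Ω) (hf : DifferentiableOn ℂ f Ω)
    (hg : WeaklyMem S g) (hgΩ : ∀ x, g x ∈ Ω) : superposition f g ∈ S := by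
  let y := g - ContinuousMap.const X c
  have hopen := isOpen_setOf_forall_add_smul_mem hΩ (ContinuousMap.const X c) y
  have hsegment : segment ℝ (0 : ℂ) 1 ⊆ {r : ℂ | ∀ x, (ContinuousMap.const X c + r • y) x ∈ Ω} := by
    intro r hr x
    obtain ⟨a, b, ha, hb, hab, rfl⟩ := hr
    have hcomb : (ContinuousMap.const X c + (a • (0 : ℂ) + b • (1 : ℂ)) • y) x =
        a • c + b • g x := by
      simp only [y, eq_sub_of_add_eq hab, ContinuousMap.add_apply, ContinuousMap.const_apply,
        ContinuousMap.smul_apply, ContinuousMap.sub_apply, smul_zero, zero_add, smul_assoc,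
        one_smul, sub_smul, smul_sub]
      abel
    exact hcomb ▸ hstar (hgΩ x) ha hb hab
  have hanalytic := ((differentiableOn_superposition_add_smul hΩ hf
    (ContinuousMap.const X c) y).analyticOnNhd hopen).mono hsegment
  have hmem := mem_of_forall_iteratedDeriv_mem (S := Subalgebra.toSubmodule S) hS
    (convex_segment _ _).isPreconnected hanalytic (left_mem_segment ..) (fun m ↦
      iteratedDeriv_superposition_const_add_smul_mem hΩ hc (hg.sub (weaklyMem_const S c)) m hf)
    (right_mem_segment ..)
  simpa [y] using hmem

lemma exists_mem_eq_one_of_re_pos_eq_zero_of_re_neg (hS : IsClosed (S : Set C(X, ℂ)))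
    {w : C(X, ℂ)} (hw : w ∈ S) (hre : ∀ x, (w x).re ≠ 0) :
    ∃ χ ∈ S, ∀ x, (0 < (w x).re → χ x = 1) ∧ ((w x).re < 0 → χ x = 0) := by
  let f (z : ℂ) : ℂ := (z ^ (2⁻¹ : ℂ))⁻¹
  have hf : DifferentiableOn ℂ f Complex.slitPlane := fun z hz ↦
    ((differentiableAt_id.cpow_const hz).inv
      (by simp [Complex.slitPlane_ne_zero hz])).differentiableWithinAt
  have hslit (x : X) : (w ^ 2) x ∈ Complex.slitPlane := sq_mem_slitPlane (hre x)
  have hfS := superposition_mem_of_starConvex hS Complex.one_mem_slitPlane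
    Complex.starConvex_one_slitPlane Complex.isOpen_slitPlane hf
    (weaklyMem_of_mem (S.pow_mem hw 2)) hslit
  -- On `{Re z ≠ 0}` the function `z * (z ^ 2) ^ (-1 / 2)` is the sign of `Re z`.
  refine ⟨(2⁻¹ : ℂ) • (1 + w * superposition f (w ^ 2)),
    S.smul_mem (S.add_mem S.one_mem (S.mul_mem hw hfS)) _, fun x ↦ ⟨fun hx ↦ ?_, fun hx ↦ ?_⟩⟩
  · have hroot : f (w x ^ 2) = (w x)⁻¹ := congrArg Inv.inv (Complex.sq_cpow_two_inv hx)
    have hwx : w x ≠ 0 := fun h ↦ hre x (by simp [h])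
    norm_num [superposition_apply hf.continuousOn hslit, hroot, hwx]
  · have hroot : f (w x ^ 2) = (-w x)⁻¹ := by
      rw [← neg_sq]
      exact congrArg Inv.inv (Complex.sq_cpow_two_inv (by simpa using hx))
    have hwx : w x ≠ 0 := fun h ↦ hre x (by simp [h])
    norm_num [superposition_apply hf.continuousOn hslit, hroot, hwx]

lemma exists_mem_forall_eq_mul_of_convex (hS : IsClosed (S : Set C(X, ℂ))) {χ : C(X, ℂ)}
    (hχ : χ ∈ S) (hΩ : IsOpen Ω) (hconv : Convex ℝ Ω) (hf : DifferentiableOn ℂ f Ω)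
    (hg : WeaklyMem S g) (hχg : ∀ x, χ x = 1 ∧ g x ∈ Ω ∨ χ x = 0) :
    ∃ u ∈ S, ∀ x, u x = χ x * f (g x) := by
  rcases Ω.eq_empty_or_nonempty with rfl | ⟨c, hc⟩
  · exact ⟨0, S.zero_mem, fun x ↦ by simp [(hχg x).resolve_left fun h ↦ h.2]⟩
  let k := χ • (g - ContinuousMap.const X c) + ContinuousMap.const X c
  have hk : WeaklyMem S k :=
    ((hg.sub (weaklyMem_const S c)).smul hχ).add (weaklyMem_const S c)
  have hkΩ (x : X) : k x ∈ Ω := by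
    rcases hχg x with ⟨hx, hgx⟩ | hx
    · simpa [k, hx] using hgx
    · simpa [k, hx] using hc
  refine ⟨χ * superposition f k, S.mul_mem hχ
    (superposition_mem_of_starConvex hS hc (hconv.starConvex hc) hΩ hf hk hkΩ), fun x ↦ ?_⟩
  rw [ContinuousMap.mul_apply, superposition_apply hf.continuousOn hkΩ]
  rcases hχg x with ⟨hx, -⟩ | hx <;> simp [k, hx]

lemma superposition_mem_of_disjoint_convex {Ω₁ Ω₂ : Set E} (hS : IsClosed (S : Set C(X, ℂ)))
    (hΩ₁ : IsOpen Ω₁) (hconv₁ : Convex ℝ Ω₁) (hΩ₂ : IsOpen Ω₂) (hconv₂ : Convex ℝ Ω₂)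
    (hdisj : Disjoint Ω₁ Ω₂) (hf : DifferentiableOn ℂ f (Ω₁ ∪ Ω₂)) (hg : WeaklyMem S g)
    (hgΩ : ∀ x, g x ∈ Ω₁ ∪ Ω₂) : superposition f g ∈ S := by
  obtain ⟨φ, t, hφ₁, hφ₂⟩ :=
    RCLike.geometric_hahn_banach_open_open (𝕜 := ℂ) hconv₁ hΩ₁ hconv₂ hΩ₂ hdisj
  let w := (φ : C(E, ℂ)).comp g - ContinuousMap.const X (t : ℂ)
  have hw : w ∈ S := S.sub_mem (hg φ) (const_mem S t)
  have hw₁ (x : X) (hx : g x ∈ Ω₁) : (w x).re < 0 := by simpa [w] using hφ₁ _ hx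
  have hw₂ (x : X) (hx : g x ∈ Ω₂) : 0 < (w x).re := by simpa [w] using hφ₂ _ hx
  obtain ⟨χ, hχ, hχw⟩ := exists_mem_eq_one_of_re_pos_eq_zero_of_re_neg hS hw fun x ↦
    (hgΩ x).elim (fun hx ↦ (hw₁ x hx).ne) fun hx ↦ (hw₂ x hx).ne'
  have hχg (x : X) : χ x = 0 ∧ g x ∈ Ω₁ ∨ χ x = 1 ∧ g x ∈ Ω₂ :=
    (hgΩ x).imp (fun hx ↦ ⟨(hχw x).2 (hw₁ x hx), hx⟩) fun hx ↦ ⟨(hχw x).1 (hw₂ x hx), hx⟩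
  obtain ⟨u₁, hu₁, hu₁f⟩ := exists_mem_forall_eq_mul_of_convex hS (S.sub_mem S.one_mem hχ) hΩ₁
    hconv₁ (hf.mono subset_union_left) hg fun x ↦ (hχg x).imp
      (fun hx ↦ ⟨by simp [hx.1], hx.2⟩) fun hx ↦ by simp [hx.1]
  obtain ⟨u₂, hu₂, hu₂f⟩ := exists_mem_forall_eq_mul_of_convex hS hχ hΩ₂ hconv₂
    (hf.mono subset_union_right) hg fun x ↦ (hχg x).symm.imp_right And.left
  have hsum : superposition f g = u₁ + u₂ := by
    ext x
    simp [superposition_apply hf.continuousOn hgΩ, hu₁f, hu₂f, ← add_mul]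
  exact hsum ▸ S.add_mem hu₁ hu₂

end ClosedSubalgebra

lemma weaklyMem_of_forall_apply_mem {X ι : Type*} [TopologicalSpace X] [Fintype ι]
    {S : Subalgebra ℂ C(X, ℂ)} {g : C(X, ι → ℂ)}
    (hg : ∀ i, (ContinuousMap.eval i).comp g ∈ S) : WeaklyMem S g := fun φ ↦ by
  classical
  have hsum : (φ : C(ι → ℂ, ℂ)).comp g =
      ∑ i, φ (Pi.single i 1) • (ContinuousMap.eval i).comp g := by
    ext x
    simpa [ContinuousMap.sum_apply, mul_comm] using congrArg φ (pi_eq_sum_univ' (g x))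
  exact hsum ▸ S.sum_mem fun i _ ↦ S.smul_mem (hg i) _

lemma differentiable_mvEval {n : ℕ} (Q : MvPolynomial (Fin n) ℂ) :
    Differentiable ℂ (mvEval Q) := fun z ↦
  (AnalyticOnNhd.eval_mvPolynomial Q z (mem_univ z)).differentiableAt

lemma aeval_apply_eq_mvEval {n : ℕ} {X : Type*} [TopologicalSpace X] (g : C(X, Fin n → ℂ))
    (Q : MvPolynomial (Fin n) ℂ) (x : X) :
    MvPolynomial.aeval (fun i ↦ (ContinuousMap.eval i).comp g) Q x = mvEval Q (g x) := by
  rw [mvEval, ← MvPolynomial.aeval_eq_eval]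
  exact MvPolynomial.comp_aeval_apply _ (ContinuousMap.evalAlgHom ℂ ℂ x) Q

lemma exists_tendstoUniformlyOn_mvEval {n : ℕ} {Ω₁ Ω₂ K : Set (Fin n → ℂ)}
    {f : (Fin n → ℂ) → ℂ} (hΩ₁ : IsOpen Ω₁) (hconv₁ : Convex ℝ Ω₁) (hΩ₂ : IsOpen Ω₂)
    (hconv₂ : Convex ℝ Ω₂) (hdisj : Disjoint Ω₁ Ω₂) (hf : DifferentiableOn ℂ f (Ω₁ ∪ Ω₂))
    (hK : IsCompact K) (hKΩ : K ⊆ Ω₁ ∪ Ω₂) :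
    ∃ Q : ℕ → MvPolynomial (Fin n) ℂ,
      TendstoUniformlyOn (fun k ↦ mvEval (Q k)) f atTop K := by
  have : CompactSpace K := isCompact_iff_compactSpace.1 hK
  let g : C(K, Fin n → ℂ) := ⟨Subtype.val, continuous_subtype_val⟩
  let A := (MvPolynomial.aeval fun i ↦ (ContinuousMap.eval i).comp g).range (R := ℂ)
  have hg : WeaklyMem A.topologicalClosure g := weaklyMem_of_forall_apply_mem fun i ↦
    A.le_topologicalClosure ⟨MvPolynomial.X i, MvPolynomial.aeval_X _ i⟩
  have hmem := superposition_mem_of_disjoint_convex A.isClosed_topologicalClosure hΩ₁ hconv₁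
    hΩ₂ hconv₂ hdisj hf hg fun x ↦ hKΩ x.2
  obtain ⟨u, huA, hu⟩ := mem_closure_iff_seq_limit.1 hmem
  choose Q hQ using huA
  refine ⟨Q, tendstoUniformlyOn_iff_tendstoUniformly_comp_coe.2 ?_⟩
  convert ContinuousMap.tendsto_iff_tendstoUniformly.1 hu using 1
  · ext k x
    rw [← hQ]
    exact (aeval_apply_eq_mvEval g (Q k) x).symm
  · ext x
    exact (superposition_apply (g := g) hf.continuousOn (fun x ↦ hKΩ x.2) x).symm

section PartialDerivatives

variable {n : ℕ} {Ω : Set (Fin n → ℂ)} {f : (Fin n → ℂ) → ℂ}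

lemma differentiableOn_iterate_pd (hΩ : IsOpen Ω) (hf : DifferentiableOn ℂ f Ω) (i : Fin n)
    (m : ℕ) : DifferentiableOn ℂ ((pd i)^[m] f) Ω := by
  induction m with
  | zero => exact hf
  | succ m ih =>
    rw [Function.iterate_succ_apply']
    exact differentiableOn_fderiv_apply hΩ ih _

variable {κ : Type*} {l : Filter κ} {u : κ → (Fin n → ℂ) → ℂ}

lemma tendstoLocallyUniformlyOn_pd (hΩ : IsOpen Ω) (hu : ∀ᶠ k in l, DifferentiableOn ℂ (u k) Ω)
    (hf : DifferentiableOn ℂ f Ω) (h : TendstoLocallyUniformlyOn u f l Ω) (i : Fin n) :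
    TendstoLocallyUniformlyOn (fun k ↦ pd i (u k)) (pd i f) l Ω :=
  (ContinuousLinearMap.apply ℂ ℂ
    (Pi.single i 1 : Fin n → ℂ)).uniformContinuous.comp_tendstoLocallyUniformlyOn
    (tendstoLocallyUniformlyOn_fderiv hΩ hu hf h)

lemma tendstoLocallyUniformlyOn_iterate_pd (hΩ : IsOpen Ω)
    (hu : ∀ᶠ k in l, DifferentiableOn ℂ (u k) Ω) (hf : DifferentiableOn ℂ f Ω)
    (h : TendstoLocallyUniformlyOn u f l Ω) (i : Fin n) (m : ℕ) :
    TendstoLocallyUniformlyOn (fun k ↦ (pd i)^[m] (u k)) ((pd i)^[m] f) l Ω := by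
  induction m with
  | zero => exact h
  | succ m ih =>
    simp only [Function.iterate_succ_apply']
    exact tendstoLocallyUniformlyOn_pd hΩ
      (hu.mono fun k hk ↦ differentiableOn_iterate_pd hΩ hk i m)
      (differentiableOn_iterate_pd hΩ hf i m) ih i

lemma differentiableOn_foldr_iterate_pd (hΩ : IsOpen Ω) (hf : DifferentiableOn ℂ f Ω)
    (ℓ : Fin n → ℕ) (is : List (Fin n)) :
    DifferentiableOn ℂ (is.foldr (fun i g ↦ (pd i)^[ℓ i] g) f) Ω := by
  induction is with
  | nil => exact hf
  | cons i is ih => exact differentiableOn_iterate_pd hΩ ih i (ℓ i)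

lemma tendstoLocallyUniformlyOn_Dml (hΩ : IsOpen Ω) (hu : ∀ᶠ k in l, DifferentiableOn ℂ (u k) Ω)
    (hf : DifferentiableOn ℂ f Ω) (h : TendstoLocallyUniformlyOn u f l Ω) (ℓ : Fin n → ℕ) :
    TendstoLocallyUniformlyOn (fun k ↦ Dml ℓ (u k)) (Dml ℓ f) l Ω := by
  unfold Dml
  induction List.finRange n with
  | nil => exact h
  | cons i is ih =>
    exact tendstoLocallyUniformlyOn_iterate_pd hΩ
      (hu.mono fun k hk ↦ differentiableOn_foldr_iterate_pd hΩ hk ℓ is)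
      (differentiableOn_foldr_iterate_pd hΩ hf ℓ is) ih i (ℓ i)

end PartialDerivatives

/-- polynomial approximation together with finitely many partial
derivatives, on compact subsets of a union of two disjoint open convex sets. -/
theorem runge_union_two_open_convex_with_derivs (n : ℕ) (Ω₁ Ω₂ : Set (Fin n → ℂ))
    (hΩ₁o : IsOpen Ω₁) (hΩ₁cv : Convex ℝ Ω₁)
    (hΩ₂o : IsOpen Ω₂) (hΩ₂cv : Convex ℝ Ω₂)
    (hdisj : Disjoint Ω₁ Ω₂)
    (f : (Fin n → ℂ) → ℂ) (hf : DifferentiableOn ℂ f (Ω₁ ∪ Ω₂))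
    (L : Set (Fin n → ℂ)) (hLcpt : IsCompact L) (hLsub : L ⊆ Ω₁ ∪ Ω₂)
    (F : Finset (Fin n → ℕ)) (ε : ℝ) (hε : 0 < ε) :
    ∃ Q : MvPolynomial (Fin n) ℂ, ∀ ℓ ∈ F, ∀ z ∈ L, ‖Dml ℓ f z - Dml ℓ (mvEval Q) z‖ < ε := by
  obtain ⟨K, hK, hLK, hKΩ⟩ := exists_compact_between hLcpt (hΩ₁o.union hΩ₂o) hLsub
  obtain ⟨Q, hQ⟩ :=
    exists_tendstoUniformlyOn_mvEval hΩ₁o hΩ₁cv hΩ₂o hΩ₂cv hdisj hf hK hKΩ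
  have hDml (ℓ : Fin n → ℕ) : TendstoUniformlyOn (fun k ↦ Dml ℓ (mvEval (Q k))) (Dml ℓ f) atTop L :=
    (tendstoLocallyUniformlyOn_iff_forall_isCompact isOpen_interior).1
      (tendstoLocallyUniformlyOn_Dml isOpen_interior
        (.of_forall fun k ↦ (differentiable_mvEval (Q k)).differentiableOn)
        (hf.mono (interior_subset.trans hKΩ))
        (hQ.mono interior_subset).tendstoLocallyUniformlyOn ℓ) L hLK hLcpt
  have hclose := (eventually_all_finset F).2 fun ℓ _ ↦ Metric.tendstoUniformlyOn_iff.1 (hDml ℓ) ε hε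
  obtain ⟨k, hk⟩ := hclose.exists
  exact ⟨Q k, fun ℓ hℓ z hz ↦ dist_eq_norm (Dml ℓ f z) _ ▸ hk ℓ hℓ z hz⟩

end
end
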